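/- arXiv:1809.06525 — 9 statements merged into one kernel-verified Lean document; each statement's English description precedes it below -/
import Mathlib

section
/- Let H be a real Hilbert space, let β > 0, and let B : H → H be β-cocoercive. Let α > 0, let U : H → H be a bounded self-adjoint linear operator with ⟨Ux, x⟩ ≥ α‖x‖² for all x ∈ H, and let V : H → H be a bounded self-adjoint linear operator with V∘U = U∘V = id (so V = U⁻¹). Then U∘B is (β/‖U‖)-cocoercive with respect to the inner product ⟨x, y⟩_V := ⟨Vx, y⟩; that is, for all x, y ∈ H, ⟨V(U(Bx) − U(By)), x − y⟩ ≥ (β/‖U‖)·⟨V(U(Bx) − U(By)), U(Bx) − U(By)⟩. -/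
open RealInnerProductSpace

/-- If `B` is `β`-cocoercive and `U` is a bounded self-adjoint operator with
`⟨Ux, x⟩ ≥ α‖x‖²` and inverse `V`, then `U ∘ B` is `(β/‖U‖)`-cocoercive with respect to the
inner product `⟨x, y⟩_V := ⟨Vx, y⟩`. -/
theorem variable_metric_cocoercive
    {H : Type*} [NormedAddCommGroup H] [InnerProductSpace ℝ H] [CompleteSpace H]
    (β : ℝ) (hβ : 0 < β) (B : H → H)
    (hB : ∀ x y : H, ⟪x - y, B x - B y⟫ ≥ β * ‖B x - B y‖ ^ 2)
    (α : ℝ) (hα : 0 < α) (U V : H →L[ℝ] H)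
    (hU : IsSelfAdjoint U)
    (hUpos : ∀ x : H, ⟪U x, x⟫ ≥ α * ‖x‖ ^ 2)
    (hV : IsSelfAdjoint V)
    (hVU : V.comp U = ContinuousLinearMap.id ℝ H)
    (hUV : U.comp V = ContinuousLinearMap.id ℝ H) :
    ∀ x y : H,
      ⟪V (U (B x) - U (B y)), x - y⟫ ≥
        (β / ‖U‖) * ⟪V (U (B x) - U (B y)), U (B x) - U (B y)⟫ := by
  intro x y
  have h1 : V (U (B x) - U (B y)) = B x - B y := by
    rw [← map_sub]
    exact congrArg (fun T : H →L[ℝ] H => T (B x - B y)) hVU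
  rw [h1, ← map_sub]
  have h2 := hB x y
  rw [real_inner_comm] at h2
  generalize B x - B y = d at *
  have h3 : ⟪d, U d⟫ ≤ ‖U‖ * ‖d‖ ^ 2 := by
    calc ⟪d, U d⟫ ≤ ‖d‖ * ‖U d‖ := real_inner_le_norm _ _
      _ ≤ ‖d‖ * (‖U‖ * ‖d‖) := by gcongr; exact U.le_opNorm d
      _ = ‖U‖ * ‖d‖ ^ 2 := by ring
  refine ge_trans h2 ?_
  rcases (norm_nonneg U).eq_or_lt with h | h
  · rw [← h, div_zero, zero_mul]
    positivity
  · calc β / ‖U‖ * ⟪d, U d⟫ ≤ β / ‖U‖ * (‖U‖ * ‖d‖ ^ 2) := by gcongr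
      _ = β * ‖d‖ ^ 2 := by field_simp
end

section
/- Let H be a real Hilbert space, let β > 0, and let B : H → H be β-cocoercive. Let α > 0, let U : H → H be a bounded self-adjoint linear operator with ⟨Ux, x⟩ ≥ α‖x‖² for all x ∈ H, and let V : H → H be a bounded self-adjoint linear operator with V∘U = U∘V = id. Then for every γ with 0 < γ < 2β/‖U‖, the map T := id − γ·(U∘B) is a-averaged with a := γ‖U‖/(2β) with respect to the norm ‖·‖_V; explicitly, for all x, y ∈ H, ‖Tx − Ty‖²_V ≤ ‖x − y‖²_V − ((1 − a)/a)·‖γ·U(Bx) − γ·U(By)‖²_V. -/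
open RealInnerProductSpace

/-- If `B` is `β`-cocoercive and `U` is a bounded self-adjoint operator with
`⟨Ux, x⟩ ≥ α‖x‖²` and inverse `V`, then for `0 < γ < 2β/‖U‖`, the map
`T := id − γ·(U∘B)` is `a`-averaged with `a := γ‖U‖/(2β)` with respect to `‖·‖_V`. -/
theorem variable_metric_forward_step_averaged
    {H : Type*} [NormedAddCommGroup H] [InnerProductSpace ℝ H] [CompleteSpace H]
    (β : ℝ) (hβ : 0 < β) (B : H → H)
    (hB : ∀ x y : H, ⟪x - y, B x - B y⟫ ≥ β * ‖B x - B y‖ ^ 2)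
    (α : ℝ) (hα : 0 < α) (U V : H →L[ℝ] H)
    (hU : IsSelfAdjoint U)
    (hUpos : ∀ x : H, ⟪U x, x⟫ ≥ α * ‖x‖ ^ 2)
    (hV : IsSelfAdjoint V)
    (hVU : V.comp U = ContinuousLinearMap.id ℝ H)
    (hUV : U.comp V = ContinuousLinearMap.id ℝ H) :
    ∀ γ : ℝ, 0 < γ → γ < 2 * β / ‖U‖ →
      ∀ x y : H,
        letI T : H → H := fun z => z - γ • U (B z)
        letI a : ℝ := γ * ‖U‖ / (2 * β)
        ⟪V (T x - T y), T x - T y⟫ ≤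
          ⟪V (x - y), x - y⟫ -
            ((1 - a) / a) *
              ⟪V (γ • U (B x) - γ • U (B y)), γ • U (B x) - γ • U (B y)⟫ := by
  intro γ hγ hγ2 x y
  have hn : 0 < ‖U‖ := by
    rcases (norm_nonneg U).eq_or_lt with h | h
    · rw [← h] at hγ2
      simp at hγ2
      linarith
    · exact h
  have hVU' : ∀ z, V (U z) = z := fun z => by
    simpa using congrArg (fun f : H →L[ℝ] H => f z) hVU
  have hsym : ∀ u v : H, ⟪V u, v⟫ = ⟪u, V v⟫ := fun u v => hV.isSymmetric u v
  have hc := hB x y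
  have e1 : γ • U (B x) - γ • U (B y) = γ • U (B x - B y) := by
    rw [map_sub, smul_sub]
  have e2 : (x - γ • U (B x)) - (y - γ • U (B y)) = (x - y) - γ • U (B x - B y) := by
    rw [← e1]; abel
  show ⟪V ((x - γ • U (B x)) - (y - γ • U (B y))), (x - γ • U (B x)) - (y - γ • U (B y))⟫ ≤
    ⟪V (x - y), x - y⟫ - ((1 - γ * ‖U‖ / (2 * β)) / (γ * ‖U‖ / (2 * β))) *
      ⟪V (γ • U (B x) - γ • U (B y)), γ • U (B x) - γ • U (B y)⟫
  rw [e1, e2]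
  generalize B x - B y = b at *
  generalize x - y = d at *
  have hq : ⟪b, U b⟫ ≤ ‖U‖ * ‖b‖ ^ 2 := by
    calc ⟪b, U b⟫ ≤ ‖b‖ * ‖U b‖ := real_inner_le_norm _ _
      _ ≤ ‖b‖ * (‖U‖ * ‖b‖) := by gcongr; exact U.le_opNorm b
      _ = _ := by ring
  have e3 : ⟪V d, U b⟫ = ⟪d, b⟫ := by rw [hsym, hVU']
  have e4 : ⟪V (d - γ • U b), d - γ • U b⟫
      = ⟪V d, d⟫ - 2 * γ * ⟪d, b⟫ + γ ^ 2 * ⟪b, U b⟫ := by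
    simp only [map_sub, map_smul, hVU', inner_sub_left, inner_sub_right, inner_smul_left,
      inner_smul_right, e3, real_inner_comm d b, conj_trivial]
    ring
  have e5 : ⟪V (γ • U b), γ • U b⟫ = γ ^ 2 * ⟪b, U b⟫ := by
    simp only [map_smul, hVU', inner_smul_left, inner_smul_right, conj_trivial]
    ring
  rw [e4, e5]
  have e6 : (1 - γ * ‖U‖ / (2 * β)) / (γ * ‖U‖ / (2 * β)) * (γ ^ 2 * ⟪b, U b⟫)
      = 2 * γ * (β * (⟪b, U b⟫ / ‖U‖)) - γ ^ 2 * ⟪b, U b⟫ := by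
    field_simp
  rw [e6]
  have h7 : ⟪b, U b⟫ / ‖U‖ ≤ ‖b‖ ^ 2 := by
    rw [div_le_iff₀ hn]; linarith
  have h8 : β * (⟪b, U b⟫ / ‖U‖) ≤ ⟪d, b⟫ :=
    (mul_le_mul_of_nonneg_left h7 hβ.le).trans hc
  have h9 := mul_le_mul_of_nonneg_left h8 (by positivity : 0 ≤ 2 * γ)
  linarith
end

section
/- Let H be a real Hilbert space, let β > 0, and let B : H → H be β-cocoercive. Let α > 0, let U : H → H be a bounded self-adjoint linear operator with ⟨Ux, x⟩ ≥ α‖x‖² for all x ∈ H, and let V : H → H be a bounded self-adjoint linear operator with V∘U = U∘V = id. Let J : H → H be firmly nonexpansive with respect to ‖·‖_V. Then for every γ with 0 < γ < 2β/‖U‖, the map T := J∘(id − γ·(U∘B)) is a-averaged with a := 2β/(4β − γ‖U‖) with respect to ‖·‖_V; explicitly, for all x, y ∈ H, ‖Tx − Ty‖²_V ≤ ‖x − y‖²_V − ((1 − a)/a)·‖(x − Tx) − (y − Ty)‖²_V. -/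
open RealInnerProductSpace

/-- If `B` is `β`-cocoercive, `U` is a bounded self-adjoint operator with
`⟨Ux, x⟩ ≥ α‖x‖²` and inverse `V`, and `J` is firmly nonexpansive with respect to `‖·‖_V`,
then for `0 < γ < 2β/‖U‖`, the map `T := J ∘ (id − γ·(U∘B))` is `a`-averaged with
`a := 2β/(4β − γ‖U‖)` with respect to `‖·‖_V`. -/
theorem variable_metric_forward_backward_averaged
    {H : Type*} [NormedAddCommGroup H] [InnerProductSpace ℝ H] [CompleteSpace H]
    (β : ℝ) (hβ : 0 < β) (B : H → H)
    (hB : ∀ x y : H, ⟪x - y, B x - B y⟫ ≥ β * ‖B x - B y‖ ^ 2)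
    (α : ℝ) (hα : 0 < α) (U V : H →L[ℝ] H)
    (hU : IsSelfAdjoint U)
    (hUpos : ∀ x : H, ⟪U x, x⟫ ≥ α * ‖x‖ ^ 2)
    (hV : IsSelfAdjoint V)
    (hVU : V.comp U = ContinuousLinearMap.id ℝ H)
    (hUV : U.comp V = ContinuousLinearMap.id ℝ H)
    (J : H → H)
    (hJ : ∀ x y : H,
      ⟪V (J x - J y), J x - J y⟫ ≤
        ⟪V (x - y), x - y⟫ - ⟪V ((x - J x) - (y - J y)), (x - J x) - (y - J y)⟫) :
    ∀ γ : ℝ, 0 < γ → γ < 2 * β / ‖U‖ →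
      ∀ x y : H,
        letI T : H → H := fun z => J (z - γ • U (B z))
        letI a : ℝ := 2 * β / (4 * β - γ * ‖U‖)
        ⟪V (T x - T y), T x - T y⟫ ≤
          ⟪V (x - y), x - y⟫ -
            ((1 - a) / a) *
              ⟪V ((x - T x) - (y - T y)), (x - T x) - (y - T y)⟫ := by
  intro γ hγ hγL x y
  have hVUa : ∀ z, V (U z) = z := fun z => by
    simpa using congrArg (fun f : H →L[ℝ] H => f z) hVU
  have hUVa : ∀ z, U (V z) = z := fun z => by
    simpa using congrArg (fun f : H →L[ℝ] H => f z) hUV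
  have hsym : ∀ p q : H, ⟪V p, q⟫ = ⟪p, V q⟫ := fun p q => hV.isSymmetric p q
  have hpos : ∀ z : H, 0 ≤ ⟪V z, z⟫ := fun z => by
    have h := hUpos (V z)
    rw [hUVa, real_inner_comm] at h
    have : 0 ≤ α * ‖V z‖ ^ 2 := by positivity
    linarith
  have hL : 0 < ‖U‖ := by
    rcases (norm_nonneg U).eq_or_lt with h | h
    · rw [← h] at hγL
      simp at hγL
      linarith
    · exact h
  have hγL' : γ * ‖U‖ < 2 * β := (lt_div_iff₀ hL).1 hγL
  -- expansion of the quadratic form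
  have hexp : ∀ (r s : ℝ) (w b : H), ⟪V (r • w - s • U b), r • w - s • U b⟫ =
      r ^ 2 * ⟪V w, w⟫ - 2 * r * s * ⟪w, b⟫ + s ^ 2 * ⟪U b, b⟫ := by
    intro r s w b
    have h1 : ⟪V w, U b⟫ = ⟪w, b⟫ := by rw [hsym, hVUa]
    simp only [map_sub, map_smul, hVUa, inner_sub_left, inner_sub_right,
      real_inner_smul_left, real_inner_smul_right, h1]
    rw [real_inner_comm w b, real_inner_comm (U b) b]
    ring
  show ⟪V (J (x - γ • U (B x)) - J (y - γ • U (B y))), J (x - γ • U (B x)) - J (y - γ • U (B y))⟫ ≤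
    ⟪V (x - y), x - y⟫ - ((1 - 2 * β / (4 * β - γ * ‖U‖)) / (2 * β / (4 * β - γ * ‖U‖))) *
      ⟪V ((x - J (x - γ • U (B x))) - (y - J (y - γ • U (B y)))),
        (x - J (x - γ • U (B x))) - (y - J (y - γ • U (B y)))⟫
  have hj := hJ (x - γ • U (B x)) (y - γ • U (B y))
  generalize J (x - γ • U (B x)) = tx at *
  generalize J (y - γ • U (B y)) = ty at *
  have hb := hB x y
  have e1 : x - γ • U (B x) - (y - γ • U (B y)) = (1 : ℝ) • (x - y) - γ • U (B x - B y) := by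
    rw [map_sub]; module
  have e2 : x - γ • U (B x) - tx - (y - γ • U (B y) - ty) =
      (1 : ℝ) • (x - tx - (y - ty)) - γ • U (B x - B y) := by
    rw [map_sub]; module
  rw [e2, e1, hexp, hexp] at hj
  generalize x - tx - (y - ty) = w at *
  generalize B x - B y = b at *
  have hq := hpos (‖U‖ • w - (2 * β) • U b)
  rw [hexp] at hq
  have hu : ⟪U b, b⟫ ≤ ‖U‖ * ‖b‖ ^ 2 := by
    calc ⟪U b, b⟫ ≤ ‖U b‖ * ‖b‖ := real_inner_le_norm _ _
      _ ≤ (‖U‖ * ‖b‖) * ‖b‖ := by gcongr; exact U.le_opNorm b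
      _ = _ := by ring
  have hc : (1 - 2 * β / (4 * β - γ * ‖U‖)) / (2 * β / (4 * β - γ * ‖U‖)) =
      1 - γ * ‖U‖ / (2 * β) := by
    have h0 : 4 * β - γ * ‖U‖ ≠ 0 := by
      intro h
      linarith
    have h1 : γ * ‖U‖ = 4 * β - (4 * β - γ * ‖U‖) := by ring
    rw [h1, sub_sub_cancel]
    generalize 4 * β - γ * ‖U‖ = D at *
    field_simp
    ring
  rw [hc]
  have h4 : 4 * β * ⟪w, b⟫ ≤ ‖U‖ * ⟪V w, w⟫ + 4 * β ^ 2 * ‖b‖ ^ 2 := by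
    have h5 := mul_le_mul_of_nonneg_left hu (by positivity : 0 ≤ 4 * β ^ 2)
    refine le_of_mul_le_mul_left ?_ hL
    linarith
  have h6 : 2 * γ * ⟪w, b⟫ ≤ γ * ‖U‖ / (2 * β) * ⟪V w, w⟫ + 2 * γ * (β * ‖b‖ ^ 2) := by
    have h7 := mul_le_mul_of_nonneg_left h4 (by positivity : 0 ≤ γ / (2 * β))
    have h8 : γ / (2 * β) * (4 * β * ⟪w, b⟫) = 2 * γ * ⟪w, b⟫ := by field_simp; ring
    have h9 : γ / (2 * β) * (‖U‖ * ⟪V w, w⟫ + 4 * β ^ 2 * ‖b‖ ^ 2) =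
      γ * ‖U‖ / (2 * β) * ⟪V w, w⟫ + 2 * γ * (β * ‖b‖ ^ 2) := by field_simp; ring
    linarith
  have h10 := mul_le_mul_of_nonneg_left hb (by positivity : 0 ≤ 2 * γ)
  linarith
end

section
/- Let H be a real Hilbert space, let β > 0, let B : H → H be β-cocoercive, and let A : H → Set H be monotone. Let r > 0, s > 0, m > 0, and let U', V' : H → H be bounded self-adjoint linear operators with ⟨U'z, z⟩ ≥ m‖z‖² for all z ∈ H. Let x, p, q ∈ H satisfy (1/r)·U'(x − p) − B(x) ∈ A(p) and (1/s)·V'(x − q) − B(x) ∈ A(q) (so that p = T_{rU}x and q = T_{sV}x are values of the variable metric forward-backward operators with metrics U'⁻¹ = U and V'⁻¹ = V). Then ‖p − q‖ ≤ (1/m)·‖(U' − (r/s)·V')(x − q)‖. -/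
open RealInnerProductSpace

/-- estimate for the distance between values of two variable metric
forward-backward operators with different metrics and step sizes. -/
theorem forward_backward_metric_comparison
    {H : Type*} [NormedAddCommGroup H] [InnerProductSpace ℝ H] [CompleteSpace H]
    (β : ℝ) (hβ : 0 < β) (B : H → H)
    (hB : ∀ x y : H, ⟪x - y, B x - B y⟫ ≥ β * ‖B x - B y‖ ^ 2)
    (A : H → Set H)
    (hA : ∀ x y u v : H, u ∈ A x → v ∈ A y → ⟪x - y, u - v⟫ ≥ 0)
    (r s m : ℝ) (hr : 0 < r) (hs : 0 < s) (hm : 0 < m)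
    (U' V' : H →L[ℝ] H)
    (hU' : IsSelfAdjoint U') (hV' : IsSelfAdjoint V')
    (hU'pos : ∀ z : H, ⟪U' z, z⟫ ≥ m * ‖z‖ ^ 2)
    (x p q : H)
    (hp : (1 / r) • U' (x - p) - B x ∈ A p)
    (hq : (1 / s) • V' (x - q) - B x ∈ A q) :
    ‖p - q‖ ≤ (1 / m) * ‖U' (x - q) - (r / s) • V' (x - q)‖ := by
  have h1 := hA _ _ _ _ hp hq
  have h2 := hU'pos (p - q)
  have e : U' (x - q) - (r / s) • V' (x - q) - U' (p - q)
      = r • (((1 / r) • U' (x - p) - B x) - ((1 / s) • V' (x - q) - B x)) := by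
    have e1 : U' (x - p) = U' (x - q) - U' (p - q) := by
      rw [← map_sub]; congr 1; abel
    rw [sub_sub_sub_cancel_right, smul_sub, smul_smul, smul_smul, e1,
      mul_one_div_cancel hr.ne', one_smul, mul_one_div]
    abel
  set w := U' (x - q) - (r / s) • V' (x - q) with hw
  have h3 : 0 ≤ inner ℝ (p - q) (w - U' (p - q)) := by
    rw [e, inner_smul_right]
    exact mul_nonneg hr.le h1
  rw [inner_sub_right, real_inner_comm (U' (p - q)) (p - q)] at h3
  have h4 := real_inner_le_norm (p - q) w
  have h5 : m * ‖p - q‖ ^ 2 ≤ ‖p - q‖ * ‖w‖ := by linarith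
  rw [one_div, ← div_eq_inv_mul, le_div_iff₀ hm]
  rcases (norm_nonneg (p - q)).eq_or_lt with h | h
  · rw [← h]; simp
  · refine le_of_mul_le_mul_left ?_ h
    nlinarith
end

section
/- Let H be a real Hilbert space, let β > 0, let B : H → H be β-cocoercive, let α > 0, let U : H → H be a bounded self-adjoint linear operator with ⟨Ux, x⟩ ≥ α‖x‖² for all x and with ‖U‖ ≤ μ for some μ > 0, and let V : H → H be a bounded self-adjoint linear operator with V∘U = U∘V = id. Let J : H → H be firmly nonexpansive with respect to ‖·‖_V, let γ > 0, and let x* ∈ H satisfy x* = J(x* − γ·U(B x*)). Then for every x ∈ H, writing p := J(x − γ·U(Bx)) and w := (x − p) − γ·(U(Bx) − U(Bx*)), one has ‖p − x*‖²_V ≤ ‖x − x*‖²_V − γ·(2β − γμ)·‖Bx − Bx*‖² − ‖w‖²_V. -/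
open RealInnerProductSpace

/-- key estimate combining firm nonexpansiveness of the resolvent with
cocoercivity of `B` in the variable metric setting. -/
theorem forward_backward_key_estimate
    {H : Type*} [NormedAddCommGroup H] [InnerProductSpace ℝ H] [CompleteSpace H]
    (β : ℝ) (hβ : 0 < β) (B : H → H)
    (hB : ∀ x y : H, ⟪x - y, B x - B y⟫ ≥ β * ‖B x - B y‖ ^ 2)
    (α : ℝ) (hα : 0 < α) (μ : ℝ) (hμ : 0 < μ)
    (U V : H →L[ℝ] H)
    (hU : IsSelfAdjoint U)
    (hUpos : ∀ x : H, ⟪U x, x⟫ ≥ α * ‖x‖ ^ 2)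
    (hUnorm : ‖U‖ ≤ μ)
    (hV : IsSelfAdjoint V)
    (hVU : V.comp U = ContinuousLinearMap.id ℝ H)
    (hUV : U.comp V = ContinuousLinearMap.id ℝ H)
    (J : H → H)
    (hJ : ∀ x y : H,
      ⟪V (J x - J y), J x - J y⟫ ≤
        ⟪V (x - y), x - y⟫ - ⟪V ((x - J x) - (y - J y)), (x - J x) - (y - J y)⟫)
    (γ : ℝ) (hγ : 0 < γ)
    (xs : H) (hxs : xs = J (xs - γ • U (B xs))) :
    ∀ x : H,
      letI p : H := J (x - γ • U (B x))
      letI w : H := (x - p) - γ • (U (B x) - U (B xs))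
      ⟪V (p - xs), p - xs⟫ ≤
        ⟪V (x - xs), x - xs⟫ - γ * (2 * β - γ * μ) * ‖B x - B xs‖ ^ 2 - ⟪V w, w⟫ := by
  intro x
  have h := hJ (x - γ • U (B x)) (xs - γ • U (B xs))
  rw [← hxs] at h
  generalize J (x - γ • U (B x)) = p at h ⊢
  have hc := hB x xs
  have e1 : x - γ • U (B x) - (xs - γ • U (B xs)) = (x - xs) - γ • U (B x - B xs) := by
    rw [map_sub, smul_sub]; abel
  have e2 : x - γ • U (B x) - p - (xs - γ • U (B xs) - xs)
      = (x - p) - γ • (U (B x) - U (B xs)) := by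
    rw [smul_sub]; abel
  rw [e1, e2] at h
  generalize B x - B xs = d at h hc ⊢
  generalize x - xs = z at h hc ⊢
  have hVU' : V (U d) = d := by
    have := congrArg (fun T : H →L[ℝ] H => T d) hVU
    simpa using this
  have hs : ⟪V z, U d⟫ = ⟪z, d⟫ := by
    have := hV.isSymmetric z (U d)
    simp only [ContinuousLinearMap.coe_coe] at this
    rw [this, hVU']
  have hd : ⟪d, U d⟫ ≤ μ * ‖d‖ ^ 2 := by
    calc ⟪d, U d⟫ ≤ ‖d‖ * ‖U d‖ := real_inner_le_norm _ _
      _ ≤ ‖d‖ * (μ * ‖d‖) := by gcongr; exact U.le_of_opNorm_le hUnorm d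
      _ = μ * ‖d‖ ^ 2 := by ring
  have e3 : ⟪V (z - γ • U d), z - γ • U d⟫
      = ⟪V z, z⟫ - 2 * γ * ⟪z, d⟫ + γ ^ 2 * ⟪d, U d⟫ := by
    rw [map_sub, map_smul, hVU']
    simp only [inner_sub_left, inner_sub_right, real_inner_smul_left, real_inner_smul_right]
    rw [hs, real_inner_comm z d]; ring
  rw [e3] at h
  have k1 := mul_le_mul_of_nonneg_left hc (by positivity : 0 ≤ 2 * γ)
  have k2 := mul_le_mul_of_nonneg_left hd (by positivity : 0 ≤ γ ^ 2)
  show _ ≤ _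
  linarith
end

section
/- Under the hypotheses listed in the context (maximal monotone A, β-cocoercive B, nonempty zero set Ω, variable metrics U_k with inverses V_k, parameters γ_k ∈ (0, 2β/‖U_k‖), α_k := 2β/(4β − γ_k‖U_k‖), λ_k ∈ (0, 1/α_k), summable perturbations, resolvent maps J_k, and the iteration x_{k+1} = x_k + λ_k·(J_k(x_k − γ_k·U_k(B x_k + b_k)) + a_k − x_k)), for every x* ∈ Ω the sequence of squared variable-metric distances k ↦ ⟨V_k(x_k − x*), x_k − x*⟩ converges to a finite limit, and the sequence {x_k} is bounded. -/
open RealInnerProductSpace Filter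

lemma seq_conv (r e η : ℕ → ℝ) (hr : ∀ k, 0 ≤ r k) (he : ∀ k, 0 ≤ e k) (hη : ∀ k, 0 ≤ η k)
    (hes : Summable e) (hηs : Summable η) (h : ∀ k, r (k+1) ≤ (1 + η k) * (r k + e k)) :
    ∃ l : ℝ, Tendsto r atTop (nhds l) := by
  set P : ℕ → ℝ := fun k => ∏ i ∈ Finset.range k, (1 + η i) with hP
  have hPs : ∀ k, P (k+1) = P k * (1 + η k) := fun k => Finset.prod_range_succ _ _
  have hP1 : ∀ k, 1 ≤ P k := by
    intro k
    induction k with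
    | zero => simp [hP]
    | succ k ih => rw [hPs]; nlinarith [hη k]
  have hPm : Monotone P := monotone_nat_of_le_succ (fun k => by
    rw [hPs]; nlinarith [hη k, hP1 k])
  have hPb : ∀ k, P k ≤ Real.exp (∑' i, η i) := by
    intro k
    calc P k ≤ ∏ i ∈ Finset.range k, Real.exp (η i) := by
            apply Finset.prod_le_prod
            · intro i _; linarith [hη i]
            · intro i _; linarith [Real.add_one_le_exp (η i)]
      _ = Real.exp (∑ i ∈ Finset.range k, η i) := (Real.exp_sum _ _).symm
      _ ≤ _ := Real.exp_le_exp.2 (hηs.sum_le_tsum _ (fun i _ => hη i))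
  have hPl := tendsto_atTop_ciSup hPm ⟨_, by rintro _ ⟨k, rfl⟩; exact hPb k⟩
  set t : ℕ → ℝ := fun k => r k / P k - ∑ i ∈ Finset.range k, e i with ht
  have hPp : ∀ k, 0 < P k := fun k => by linarith [hP1 k]
  have htm : Antitone t := antitone_nat_of_succ_le (fun k => by
    simp only [ht, Finset.sum_range_succ]
    have h1 : r (k+1) / P (k+1) ≤ (r k + e k) / P k := by
      rw [div_le_div_iff₀ (hPp _) (hPp _), hPs]
      nlinarith [h k, hPp k]
    have h2 : e k / P k ≤ e k := div_le_self (he k) (hP1 k)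
    rw [add_div] at h1
    linarith)
  have htl := tendsto_atTop_ciInf htm ⟨-∑' i, e i, by
    rintro _ ⟨k, rfl⟩
    have h1 := hes.sum_le_tsum (Finset.range k) (fun i _ => he i)
    have h2 : 0 ≤ r k / P k := div_nonneg (hr k) (hPp k).le
    simp only [ht]; linarith⟩
  refine ⟨_, ((htl.add hes.hasSum.tendsto_sum_nat).mul hPl).congr (fun k => ?_)⟩
  have := (hPp k).ne'
  simp only [ht]; field_simp; ring

section
variable {H : Type*} [NormedAddCommGroup H] [InnerProductSpace ℝ H] [CompleteSpace H]

lemma sa_sym {P : H →L[ℝ] H} (hP : IsSelfAdjoint P) (x y : H) : ⟪P x, y⟫ = ⟪P y, x⟫ := by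
  have h := hP.isSymmetric x y
  simp only [ContinuousLinearMap.coe_coe] at h
  rw [h, real_inner_comm]

lemma pos_cs {P : H →L[ℝ] H} (hP : IsSelfAdjoint P) (h0 : ∀ x, 0 ≤ ⟪P x, x⟫) (x y : H) :
    ⟪P x, y⟫ ^ 2 ≤ ⟪P x, x⟫ * ⟪P y, y⟫ := by
  have h : ∀ t : ℝ, 0 ≤ ⟪P y, y⟫ * (t * t) + (2 * ⟪P x, y⟫) * t + ⟪P x, x⟫ := by
    intro t
    have := h0 (x + t • y)
    simp only [map_add, map_smul, inner_add_left, inner_add_right, inner_smul_left,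
      inner_smul_right, sa_sym hP y x, RCLike.conj_to_real] at this
    linarith
  have := discrim_le_zero h
  unfold discrim at this
  linarith

noncomputable def nrm (P : H →L[ℝ] H) (x : H) : ℝ := Real.sqrt ⟪P x, x⟫

lemma nrm_nonneg (P : H →L[ℝ] H) (x : H) : 0 ≤ nrm P x := Real.sqrt_nonneg _

lemma nrm_sq {P : H →L[ℝ] H} (h0 : ∀ x, 0 ≤ ⟪P x, x⟫) (x : H) : nrm P x ^ 2 = ⟪P x, x⟫ :=
  Real.sq_sqrt (h0 x)

lemma inner_le_nrm {P : H →L[ℝ] H} (hP : IsSelfAdjoint P) (h0 : ∀ x, 0 ≤ ⟪P x, x⟫) (x y : H) :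
    ⟪P x, y⟫ ≤ nrm P x * nrm P y := by
  refine (abs_le_of_sq_le_sq' ?_ ?_).2
  · rw [mul_pow, nrm_sq h0, nrm_sq h0]; exact pos_cs hP h0 x y
  · exact mul_nonneg (nrm_nonneg _ _) (nrm_nonneg _ _)

lemma nrm_add {P : H →L[ℝ] H} (hP : IsSelfAdjoint P) (h0 : ∀ x, 0 ≤ ⟪P x, x⟫) (x y : H) :
    nrm P (x + y) ≤ nrm P x + nrm P y := by
  apply Real.sqrt_le_iff.2
  refine ⟨add_nonneg (nrm_nonneg _ _) (nrm_nonneg _ _), ?_⟩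
  simp only [map_add, inner_add_left, inner_add_right, sa_sym hP y x]
  nlinarith [inner_le_nrm hP h0 x y, nrm_sq h0 x, nrm_sq h0 y]

lemma nrm_smul (P : H →L[ℝ] H) {c : ℝ} (hc : 0 ≤ c) (x : H) : nrm P (c • x) = c * nrm P x := by
  unfold nrm
  simp only [map_smul, inner_smul_left, inner_smul_right, RCLike.conj_to_real, ← mul_assoc]
  rw [Real.sqrt_mul (mul_nonneg hc hc), Real.sqrt_mul_self hc]

lemma sq_le_U {U V : H →L[ℝ] H} (hU : IsSelfAdjoint U) (h0 : ∀ x, 0 ≤ ⟪U x, x⟫)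
    (hUV : ∀ x, U (V x) = x) (q : H) : ‖q‖ ^ 2 ≤ ‖U‖ * ⟪V q, q⟫ := by
  have h1 := pos_cs hU h0 (V q) q
  rw [hUV, real_inner_self_eq_norm_sq, real_inner_comm] at h1
  have h2 : ⟪U q, q⟫ ≤ ‖U‖ * ‖q‖ ^ 2 := by
    have := real_inner_le_norm (U q) q
    have := U.le_opNorm q
    nlinarith [norm_nonneg q]
  have h3 : 0 ≤ ⟪V q, q⟫ := by have := h0 (V q); rwa [hUV, real_inner_comm] at this
  by_contra! hc
  have h4 : 0 < ‖q‖ ^ 2 := lt_of_le_of_lt (mul_nonneg (norm_nonneg _) h3) hc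
  nlinarith

lemma V_mono {U V U' V' : H →L[ℝ] H} {c : ℝ} (hU : IsSelfAdjoint U) (h0 : ∀ x, 0 ≤ ⟪U x, x⟫)
    (h0' : ∀ x, 0 ≤ ⟪U' x, x⟫) (hc : 0 ≤ c)
    (hUV : ∀ x, U (V x) = x) (hUV' : ∀ x, U' (V' x) = x)
    (h : ∀ z, ⟪U z, z⟫ ≤ c * ⟪U' z, z⟫) (z : H) : ⟪V' z, z⟫ ≤ c * ⟪V z, z⟫ := by
  have h1 := pos_cs hU h0 (V z) (V' z)
  have h2 := h (V' z)
  have h3 := h0 (V z)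
  have h4 := h0' (V' z)
  rw [hUV] at h1 h3
  rw [hUV'] at h2 h4
  simp only [real_inner_comm] at *
  by_contra! hcon
  have h5 := lt_of_le_of_lt (mul_nonneg hc h3) hcon
  nlinarith [mul_le_mul_of_nonneg_left h2 h3]
end

theorem fb_distance_converges_and_bounded
    {H : Type*} [NormedAddCommGroup H] [InnerProductSpace ℝ H] [CompleteSpace H]
    (β : ℝ) (hβ : 0 < β) (B : H → H)
    (hB : ∀ x y : H, ⟪x - y, B x - B y⟫ ≥ β * ‖B x - B y‖ ^ 2)
    (A : H → Set H)
    (hAmono : ∀ x y u v : H, u ∈ A x → v ∈ A y → ⟪x - y, u - v⟫ ≥ 0)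
    (hAmax : ∀ z w : H, (∀ x : H, ∀ u ∈ A x, ⟪x - z, u - w⟫ ≥ 0) → w ∈ A z)
    (hΩ : {z : H | ∃ u ∈ A z, u + B z = 0}.Nonempty)
    (α : ℝ) (hα : 0 < α) (μ : ℝ) (hμ : 0 < μ)
    (U V : ℕ → H →L[ℝ] H)
    (hU : ∀ k, IsSelfAdjoint (U k))
    (hUpos : ∀ k, ∀ x : H, ⟪U k x, x⟫ ≥ α * ‖x‖ ^ 2)
    (hV : ∀ k, IsSelfAdjoint (V k))
    (hVU : ∀ k, (V k).comp (U k) = ContinuousLinearMap.id ℝ H)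
    (hUV : ∀ k, (U k).comp (V k) = ContinuousLinearMap.id ℝ H)
    (hUnorm : ∀ k, ‖U k‖ ≤ μ)
    (η : ℕ → ℝ) (hη0 : ∀ k, 0 ≤ η k) (hηsum : Summable η)
    (hUmono : ∀ k, ∀ z : H, (1 + η k) * ⟪U (k + 1) z, z⟫ ≥ ⟪U k z, z⟫)
    (γ lam αk : ℕ → ℝ)
    (hγ : ∀ k, 0 < γ k ∧ γ k < 2 * β / ‖U k‖)
    (hαk : ∀ k, αk k = 2 * β / (4 * β - γ k * ‖U k‖))
    (hlam : ∀ k, 0 < lam k ∧ lam k < 1 / αk k)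
    (a b : ℕ → H)
    (ha : Summable (fun k => lam k * ‖a k‖))
    (hb : Summable (fun k => lam k * ‖b k‖))
    (J : ℕ → H → H)
    (hJ : ∀ k, ∀ y : H, (1 / γ k) • (V k (y - J k y)) ∈ A (J k y))
    (x : ℕ → H)
    (hx : ∀ k, x (k + 1) =
      x k + lam k • (J k (x k - γ k • U k (B (x k) + b k)) + a k - x k))
    :
    (∀ xs ∈ {z : H | ∃ u ∈ A z, u + B z = 0},
      ∃ l : ℝ, Tendsto (fun k => ⟪V k (x k - xs), x k - xs⟫) atTop (nhds l)) ∧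
    (∃ M : ℝ, ∀ k, ‖x k‖ ≤ M) := by
  have hUVx : ∀ k z, U k (V k z) = z := fun k z => by
    simpa using DFunLike.congr_fun (hUV k) z
  have hVUx : ∀ k z, V k (U k z) = z := fun k z => by
    simpa using DFunLike.congr_fun (hVU k) z
  have hU0 : ∀ k z, 0 ≤ ⟪U k z, z⟫ := fun k z => le_trans (by positivity) (hUpos k z)
  have hV0 : ∀ k z, 0 ≤ ⟪V k z, z⟫ := fun k z => by
    have := hU0 k (V k z); rwa [hUVx, real_inner_comm] at this
  have hUp : ∀ k, 0 < ‖U k‖ := fun k => by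
    rcases (norm_nonneg (U k)).lt_or_eq with h | h
    · exact h
    · have := hγ k; rw [← h, div_zero] at this; linarith [this.1, this.2]
  have hγU : ∀ k, γ k * ‖U k‖ < 2 * β := fun k => (lt_div_iff₀ (hUp k)).1 (hγ k).2
  have hVb : ∀ k z, ‖V k z‖ ≤ ‖z‖ / α := fun k z => by
    have h1 := hUpos k (V k z)
    rw [hUVx] at h1
    have h2 := real_inner_le_norm z (V k z)
    rw [le_div_iff₀ hα]
    by_contra! hc
    have h3 : 0 < ‖V k z‖ := by
      by_contra! h
      have : ‖V k z‖ = 0 := le_antisymm h (norm_nonneg _)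
      rw [this] at hc; linarith [norm_nonneg z]
    nlinarith
  obtain ⟨C, hC0, hC⟩ : ∃ C : ℝ, 0 ≤ C ∧ ∀ k z, nrm (V k) z ≤ C * ‖z‖ := by
    refine ⟨Real.sqrt (1/α), Real.sqrt_nonneg _, fun k z => ?_⟩
    apply Real.sqrt_le_iff.2
    refine ⟨by positivity, ?_⟩
    rw [mul_pow, Real.sq_sqrt (by positivity)]
    have h1 := real_inner_le_norm (V k z) z
    have h2 := mul_le_mul_of_nonneg_right (hVb k z) (norm_nonneg z)
    calc _ ≤ _ := h1.trans h2
      _ = _ := by ring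
  -- γ ‖U z‖ ≤ 2 β ‖z‖
  have hγUz : ∀ k z, ‖γ k • U k z‖ ≤ 2 * β * ‖z‖ := fun k z => by
    rw [norm_smul, Real.norm_of_nonneg (hγ k).1.le]
    calc _ ≤ γ k * (‖U k‖ * ‖z‖) := by gcongr; exact (hγ k).1.le; exact (U k).le_opNorm z
      _ = γ k * ‖U k‖ * ‖z‖ := by ring
      _ ≤ _ := by exact mul_le_mul_of_nonneg_right (hγU k).le (norm_nonneg z)
  have hJne : ∀ k y y', nrm (V k) (J k y - J k y') ≤ nrm (V k) (y - y') := fun k y y' => by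
    have h1 := hAmono _ _ _ _ (hJ k y) (hJ k y')
    rw [← smul_sub, inner_smul_right, ← map_sub] at h1
    have h2 : 0 ≤ ⟪J k y - J k y', V k (y - J k y - (y' - J k y'))⟫ :=
      nonneg_of_mul_nonneg_right h1 (one_div_pos.2 (hγ k).1)
    have h3 : y - J k y - (y' - J k y') = (y - y') - (J k y - J k y') := by abel
    rw [h3, map_sub, inner_sub_right, real_inner_comm, real_inner_comm (V k (J k y - J k y'))] at h2
    have h4 := inner_le_nrm (hV k) (hV0 k) (y - y') (J k y - J k y')
    have h5 := nrm_sq (hV0 k) (J k y - J k y')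
    by_contra! hc
    have h6 := nrm_nonneg (V k) (y - y')
    nlinarith
  have key : ∀ xs, (∃ u ∈ A xs, u + B xs = 0) → ∀ k,
      nrm (V k) (x k - xs + lam k • (J k (x k - γ k • U k (B (x k))) - x k))
        ≤ nrm (V k) (x k - xs) := by
    rintro xs ⟨u, hu, hu0⟩ k
    obtain rfl : u = - B xs := eq_neg_of_add_eq_zero_left hu0
    have hg := (hγ k).1
    have h1 := hAmono _ _ _ _ (hJ k (x k - γ k • U k (B (x k)))) hu
    set p := J k (x k - γ k • U k (B (x k))) with hp
    have hcoc := hB (x k) xs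
    set d := B (x k) - B xs with hd
    set w := x k - xs with hw
    set q := p - x k with hq
    have e1 : p - xs = w + q := by simp only [hw, hq]; abel
    have e2 : (1 / γ k) • (V k (x k - γ k • U k (B (x k)) - p)) - -B xs
        = (1 / γ k) • (-(V k q) - γ k • d) := by
      have : x k - γ k • U k (B (x k)) - p = -q - γ k • U k (B (x k)) := by
        simp only [hq]; abel
      rw [this, map_sub, map_neg, map_smul, hVUx, smul_sub, smul_sub, smul_smul, smul_smul,
        one_div_mul_cancel hg.ne', one_smul, one_smul, hd]
      abel
    rw [e1, e2, inner_smul_right] at h1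
    have h2 : 0 ≤ ⟪w + q, -(V k q) - γ k • d⟫ :=
      nonneg_of_mul_nonneg_right h1 (one_div_pos.2 hg)
    simp only [inner_add_left, inner_sub_right, inner_neg_right, inner_smul_right] at h2
    rw [real_inner_comm (V k q) w, real_inner_comm (V k q) q] at h2
    have hq2 := sq_le_U (hU k) (hU0 k) (hUVx k) q
    have hyoung : 0 ≤ 4 * β ^ 2 * ‖d‖ ^ 2 + 4 * β * ⟪q, d⟫ + ‖q‖ ^ 2 := by
      have h := real_inner_self_nonneg (x := q + (2 * β) • d)
      simp only [inner_add_left, inner_add_right, inner_smul_left, inner_smul_right,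
        RCLike.conj_to_real, real_inner_self_eq_norm_sq, real_inner_comm q d] at h
      linarith
    have hl : lam k * (2 * β) ≤ 4 * β - γ k * ‖U k‖ := by
      have h := (hlam k).2
      rw [hαk, one_div_div, lt_div_iff₀ (by positivity)] at h
      exact h.le
    have hQ := hV0 k q
    have h3 : 4 * β * ⟪V k q, w⟫ + (4 * β - γ k * ‖U k‖) * ⟪V k q, q⟫ ≤ 0 := by
      have a1 := mul_le_mul_of_nonneg_left h2 (by positivity : 0 ≤ 4 * β)
      have a2 := mul_le_mul_of_nonneg_left hcoc (by positivity : 0 ≤ 4 * β * γ k)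
      have a3 := mul_nonneg hg.le hyoung
      have a4 := mul_le_mul_of_nonneg_left hq2 hg.le
      nlinarith
    have h4 : 2 * ⟪V k q, w⟫ + lam k * ⟪V k q, q⟫ ≤ 0 := by
      have := mul_le_mul_of_nonneg_right hl hQ
      by_contra! hc
      nlinarith
    apply Real.sqrt_le_sqrt
    simp only [map_add, map_smul, inner_add_left, inner_add_right, inner_smul_left,
      inner_smul_right, RCLike.conj_to_real, sa_sym (hV k) w q]
    nlinarith [mul_nonneg (hlam k).1.le (neg_nonneg.2 h4)]
  have conv : ∀ xs, (∃ u ∈ A xs, u + B xs = 0) →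
      ∃ l : ℝ, Tendsto (fun k => nrm (V k) (x k - xs)) atTop (nhds l) := by
    intro xs hxs
    refine seq_conv _ (fun k => C * (lam k * ‖a k‖) + C * (2 * β) * (lam k * ‖b k‖)) η
      (fun k => nrm_nonneg _ _) (fun k => ?_) hη0 ((ha.mul_left _).add (hb.mul_left _)) hηsum
      (fun k => ?_)
    · have := (hlam k).1; positivity
    have hl := (hlam k).1.le
    set y := x k - γ k • U k (B (x k)) with hy
    set y' := x k - γ k • U k (B (x k) + b k) with hy'
    have e : x (k+1) - xs = (x k - xs + lam k • (J k y - x k)) +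
        lam k • (a k + (J k y' - J k y)) := by
      rw [hx k, ← hy']
      simp only [smul_sub, smul_add]
      abel
    have hyy : nrm (V k) (J k y' - J k y) ≤ C * (2 * β * ‖b k‖) := by
      have h1 := hJne k y' y
      have h2 := hC k (y' - y)
      have h3 : y' - y = -(γ k • U k (b k)) := by
        simp only [hy, hy', map_add, smul_add]; abel
      have h4 := hγUz k (b k)
      rw [← norm_neg, ← h3] at h4
      exact h1.trans (h2.trans (by gcongr))
    have hs : nrm (V k) (x (k+1) - xs) ≤ nrm (V k) (x k - xs) +
        (C * (lam k * ‖a k‖) + C * (2 * β) * (lam k * ‖b k‖)) := by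
      rw [e]
      have h1 := nrm_add (hV k) (hV0 k) (x k - xs + lam k • (J k y - x k))
        (lam k • (a k + (J k y' - J k y)))
      rw [nrm_smul _ hl] at h1
      have h2 := nrm_add (hV k) (hV0 k) (a k) (J k y' - J k y)
      have h3 := key xs hxs k
      have h4 := hC k (a k)
      have h5 := mul_le_mul_of_nonneg_left (h2.trans (add_le_add h4 hyy)) hl
      rw [← hy] at h3
      linarith
    have hm : nrm (V (k+1)) (x (k+1) - xs) ≤ (1 + η k) * nrm (V k) (x (k+1) - xs) := by
      have hn := hη0 k
      apply Real.sqrt_le_iff.2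
      refine ⟨mul_nonneg (by linarith) (nrm_nonneg _ _), ?_⟩
      rw [mul_pow, nrm_sq (hV0 k)]
      have h1 := V_mono (c := 1 + η k) (hU k) (hU0 k) (hU0 (k+1)) (by linarith) (hUVx k)
        (hUVx (k+1)) (hUmono k) (x (k+1) - xs)
      refine h1.trans ?_
      have := hV0 k (x (k+1) - xs)
      gcongr
      nlinarith
    exact hm.trans (mul_le_mul_of_nonneg_left hs (by linarith [hη0 k]))
  constructor
  · intro xs hxs
    obtain ⟨l, hl⟩ := conv xs hxs
    exact ⟨l ^ 2, (hl.pow 2).congr (fun k => nrm_sq (hV0 k) _)⟩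
  · obtain ⟨xs, hxs⟩ := hΩ
    obtain ⟨l, hl⟩ := conv xs hxs
    obtain ⟨M, hM⟩ := hl.bddAbove_range
    refine ⟨Real.sqrt μ * M + ‖xs‖, fun k => ?_⟩
    have h1 : nrm (V k) (x k - xs) ≤ M := hM ⟨k, rfl⟩
    have h2 := sq_le_U (hU k) (hU0 k) (hUVx k) (x k - xs)
    have h3 : ‖x k - xs‖ ≤ Real.sqrt μ * nrm (V k) (x k - xs) := by
      unfold nrm
      rw [← Real.sqrt_mul hμ.le]
      apply Real.le_sqrt_of_sq_le
      exact h2.trans (mul_le_mul_of_nonneg_right (hUnorm k) (hV0 k _))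
    have h4 := mul_le_mul_of_nonneg_left h1 (Real.sqrt_nonneg μ)
    have h5 := norm_add_le (x k - xs) xs
    rw [sub_add_cancel] at h5
    linarith
end

section
/- Under the hypotheses listed in the context, suppose in addition there exist λ̲ > 0 and τ > 0 with λ̲ ≤ λ_k ≤ 1/α_k − τ for all k. Then ‖x_k − J_k(x_k − γ_k·U_k(B x_k))‖ → 0 as k → ∞. -/
open RealInnerProductSpace Filter

lemma aux_bdd (D ζ ω : ℕ → ℝ) (hζ : ∀ k, 0 ≤ ζ k) (hω : ∀ k, 0 ≤ ω k)
    (sζ : Summable ζ) (sω : Summable ω) (hD : ∀ k, 0 ≤ D k)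
    (h : ∀ k, D (k+1) ≤ (1 + ζ k) * D k + ω k) : ∃ M, 0 ≤ M ∧ ∀ k, D k ≤ M := by
  have key : ∀ n, D n ≤ Real.exp (∑ i ∈ Finset.range n, ζ i) * (D 0 + ∑ i ∈ Finset.range n, ω i) := by
    intro n
    induction n with
    | zero => simp
    | succ n ih =>
      rw [Finset.sum_range_succ, Finset.sum_range_succ, Real.exp_add]
      set P := Real.exp (∑ i ∈ Finset.range n, ζ i) with hP
      set S := D 0 + ∑ i ∈ Finset.range n, ω i with hS
      have hP1 : 1 ≤ P := Real.one_le_exp (Finset.sum_nonneg fun i _ => hζ i)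
      have hS0 : 0 ≤ S := add_nonneg (hD 0) (Finset.sum_nonneg fun i _ => hω i)
      have he : 1 + ζ n ≤ Real.exp (ζ n) := by linarith [Real.add_one_le_exp (ζ n)]
      have he1 : 1 ≤ Real.exp (ζ n) := Real.one_le_exp (hζ n)
      have h1 : (1 + ζ n) * D n ≤ Real.exp (ζ n) * (P * S) :=
        mul_le_mul he ih (hD n) (by positivity)
      have h2 : 1 * ω n ≤ (P * Real.exp (ζ n)) * ω n :=
        mul_le_mul_of_nonneg_right (by nlinarith) (hω n)
      have := h n
      rw [← add_assoc, ← hS]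
      nlinarith
  refine ⟨Real.exp (∑' i, ζ i) * (D 0 + ∑' i, ω i), ?_, fun n => (key n).trans ?_⟩
  · have : 0 ≤ ∑' i, ω i := tsum_nonneg hω
    have := hD 0
    positivity
  · have h1 := sζ.sum_le_tsum (Finset.range n) (fun i _ => hζ i)
    have h2 := sω.sum_le_tsum (Finset.range n) (fun i _ => hω i)
    have h3 : 0 ≤ D 0 + ∑ i ∈ Finset.range n, ω i :=
      add_nonneg (hD 0) (Finset.sum_nonneg fun i _ => hω i)
    exact mul_le_mul (Real.exp_le_exp.2 h1) (by linarith) h3 (by positivity)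

lemma aux_RS (D δ ζ ω : ℕ → ℝ) (hζ : ∀ k, 0 ≤ ζ k) (hω : ∀ k, 0 ≤ ω k)
    (sζ : Summable ζ) (sω : Summable ω) (hD : ∀ k, 0 ≤ D k) (hδ : ∀ k, 0 ≤ δ k)
    (h : ∀ k, D (k+1) + δ k ≤ (1 + ζ k) * D k + ω k) : Summable δ := by
  obtain ⟨M, hM, hDM⟩ := aux_bdd D ζ ω hζ hω sζ sω hD (fun k => by linarith [h k, hδ k])
  have key : ∀ n, D n + ∑ i ∈ Finset.range n, δ i ≤
      D 0 + M * ∑ i ∈ Finset.range n, ζ i + ∑ i ∈ Finset.range n, ω i := by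
    intro n
    induction n with
    | zero => simp
    | succ n ih =>
      simp only [Finset.sum_range_succ]
      nlinarith [h n, mul_le_mul_of_nonneg_left (hDM n) (hζ n)]
  refine summable_of_sum_range_le (c := D 0 + M * ∑' i, ζ i + ∑' i, ω i) hδ fun n => ?_
  have h1 := sζ.sum_le_tsum (Finset.range n) (fun i _ => hζ i)
  have h2 := sω.sum_le_tsum (Finset.range n) (fun i _ => hω i)
  have := mul_le_mul_of_nonneg_left h1 hM
  linarith [key n, hD n]

section ops
variable {H : Type*} [NormedAddCommGroup H] [InnerProductSpace ℝ H] [CompleteSpace H]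

lemma aux_symm {V : H →L[ℝ] H} (hV : IsSelfAdjoint V) (x y : H) : ⟪V x, y⟫ = ⟪V y, x⟫ := by
  rw [real_inner_comm x (V y)]
  exact (ContinuousLinearMap.isSelfAdjoint_iff_isSymmetric.1 hV) x y

lemma aux_Uin (U : H →L[ℝ] H) (x : H) : ⟪U x, x⟫ ≤ ‖U‖ * ‖x‖^2 := by
  have h1 := real_inner_le_norm (U x) x
  have h2 := mul_le_mul_of_nonneg_right (U.le_opNorm x) (norm_nonneg x)
  nlinarith

lemma aux_quad {V : H →L[ℝ] H} (hV : IsSelfAdjoint V) (x y : H) (t : ℝ) :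
    ⟪V (x + t • y), x + t • y⟫ = ⟪V x, x⟫ + 2 * t * ⟪V x, y⟫ + t^2 * ⟪V y, y⟫ := by
  simp only [map_add, map_smul, inner_add_left, inner_add_right, inner_smul_left,
    inner_smul_right, aux_symm hV y x]
  simp
  ring

lemma aux_Vpos {U V : H →L[ℝ] H} {α : ℝ} (hα : 0 < α)
    (hUV : ∀ x, U (V x) = x) (hpos : ∀ x : H, ⟪U x, x⟫ ≥ α * ‖x‖ ^ 2) (x : H) :
    0 ≤ ⟪V x, x⟫ := by
  have := hpos (V x)
  rw [hUV, real_inner_comm] at this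
  nlinarith [sq_nonneg ‖V x‖]

lemma aux_Vup {U V : H →L[ℝ] H} {α : ℝ} (hα : 0 < α)
    (hUV : ∀ x, U (V x) = x) (hpos : ∀ x : H, ⟪U x, x⟫ ≥ α * ‖x‖ ^ 2) (x : H) :
    ⟪V x, x⟫ ≤ α⁻¹ * ‖x‖^2 := by
  have h := hpos (V x)
  rw [hUV, real_inner_comm] at h
  have h1 := real_inner_le_norm (V x) x
  have h2 : α * ⟪V x, x⟫ ≤ ‖x‖^2 := by nlinarith [sq_nonneg (α * ‖V x‖ - ‖x‖)]
  rw [inv_mul_eq_div, le_div_iff₀ hα]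
  linarith

lemma aux_Vlow {U V : H →L[ℝ] H} {α : ℝ} (hα : 0 < α) (hU : IsSelfAdjoint U)
    (hUV : ∀ x, U (V x) = x) (hpos : ∀ x : H, ⟪U x, x⟫ ≥ α * ‖x‖ ^ 2) (hN : 0 < ‖U‖) (x : H) :
    ‖x‖^2 ≤ ‖U‖ * ⟪V x, x⟫ := by
  have h0 : 0 ≤ ⟪U (V x + (-‖U‖⁻¹) • x), V x + (-‖U‖⁻¹) • x⟫ := by
    have := hpos (V x + (-‖U‖⁻¹) • x)
    have : 0 ≤ α * ‖V x + (-‖U‖⁻¹) • x‖^2 := by positivity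
    linarith
  rw [aux_quad hU, hUV, real_inner_self_eq_norm_sq, real_inner_comm] at h0
  have h1 := aux_Uin U x
  have h2 : (-‖U‖⁻¹)^2 * ⟪U x, x⟫ ≤ ‖U‖⁻¹ * ‖x‖^2 := by
    calc (-‖U‖⁻¹)^2 * ⟪U x, x⟫ ≤ (-‖U‖⁻¹)^2 * (‖U‖ * ‖x‖^2) := by gcongr
      _ = _ := by field_simp
  have h3 : ‖U‖⁻¹ * ‖x‖^2 ≤ ⟪V x, x⟫ := by linarith
  rwa [inv_mul_le_iff₀ hN] at h3

lemma aux_Vmono {U V U' V' : H →L[ℝ] H} {α c : ℝ} (hα : 0 < α) (hc : 0 < c)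
    (hU : IsSelfAdjoint U)
    (hUV : ∀ x, U (V x) = x) (hUV' : ∀ x, U' (V' x) = x)
    (hpos : ∀ x : H, ⟪U x, x⟫ ≥ α * ‖x‖ ^ 2)
    (hm : ∀ z : H, c * ⟪U' z, z⟫ ≥ ⟪U z, z⟫) (x : H) :
    ⟪V' x, x⟫ ≤ c * ⟪V x, x⟫ := by
  have h0 : 0 ≤ ⟪U (V x + (-c⁻¹) • V' x), V x + (-c⁻¹) • V' x⟫ := by
    have := hpos (V x + (-c⁻¹) • V' x)
    have : 0 ≤ α * ‖V x + (-c⁻¹) • V' x‖^2 := by positivity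
    linarith
  rw [aux_quad hU, hUV, real_inner_comm, real_inner_comm (V' x) x] at h0
  have h1 := hm (V' x)
  rw [hUV', real_inner_comm] at h1
  have h2 : (-c⁻¹)^2 * ⟪U (V' x), V' x⟫ ≤ c⁻¹ * ⟪V' x, x⟫ := by
    calc (-c⁻¹)^2 * ⟪U (V' x), V' x⟫ ≤ (-c⁻¹)^2 * (c * ⟪V' x, x⟫) := by gcongr
      _ = _ := by field_simp
  have h3 : c⁻¹ * ⟪V' x, x⟫ ≤ ⟪V x, x⟫ := by linarith
  rwa [inv_mul_le_iff₀ hc] at h3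

/-- resolvent nonexpansive -/
lemma aux_J {V : H →L[ℝ] H} (hV : IsSelfAdjoint V) (hVp : ∀ x, 0 ≤ ⟪V x, x⟫)
    (A : H → Set H)
    (hAmono : ∀ x y u v : H, u ∈ A x → v ∈ A y → ⟪x - y, u - v⟫ ≥ 0) {γ : ℝ} (hγ : 0 < γ)
    (J : H → H) (hJ : ∀ y : H, (1 / γ) • (V (y - J y)) ∈ A (J y)) (y y' : H) :
    ⟪V (J y - J y'), J y - J y'⟫ ≤ ⟪V (y - y'), y - y'⟫ := by
  have h := hAmono _ _ _ _ (hJ y) (hJ y')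
  rw [← smul_sub, inner_smul_right, ← map_sub] at h
  have h1 : 0 ≤ ⟪J y - J y', V (y - J y - (y' - J y'))⟫ :=
    nonneg_of_mul_nonneg_right h (by positivity)
  have e : y - J y - (y' - J y') = (y - y') - (J y - J y') := by abel
  rw [e, map_sub, inner_sub_right, real_inner_comm, real_inner_comm (V (J y - J y'))] at h1
  have h2 := hVp ((y - y') + (-1 : ℝ) • (J y - J y'))
  rw [aux_quad hV] at h2
  linarith

/-- one step estimate -/
lemma aux_step {U V : H →L[ℝ] H} (hN : ∀ x, ‖x‖^2 ≤ ‖U‖ * ⟪V x, x⟫) (hVU : ∀ x, V (U x) = x)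
    (hV : IsSelfAdjoint V)
    {β : ℝ} (hβ : 0 < β) (B : H → H)
    (hB : ∀ x y : H, ⟪x - y, B x - B y⟫ ≥ β * ‖B x - B y‖ ^ 2)
    (A : H → Set H)
    (hAmono : ∀ x y u v : H, u ∈ A x → v ∈ A y → ⟪x - y, u - v⟫ ≥ 0) {γ : ℝ} (hγ : 0 < γ)
    (J : H → H) (hJ : ∀ y : H, (1 / γ) • (V (y - J y)) ∈ A (J y)) (z : H) (hz : -B z ∈ A z)
    (y p r : H) (hp : p = J (y - γ • U (B y))) (hr : r = y - p) :
    (2 - γ * ‖U‖ / (2 * β)) * ⟪V r, r⟫ ≤ 2 * ⟪V (y - z), r⟫ := by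
  have h := hAmono _ _ _ _ (hJ (y - γ • U (B y))) hz
  rw [← hp] at h
  have e : (1 / γ) • V (y - γ • U (B y) - p) - -B z = (1/γ) • V r - (B y - B z) := by
    have : y - γ • U (B y) - p = r - γ • U (B y) := by rw [hr]; abel
    rw [this, map_sub, map_smul, hVU, smul_sub, smul_smul, one_div, inv_mul_cancel₀ hγ.ne']
    simp; abel
  have e2 : p - z = (y - z) - r := by rw [hr]; abel
  rw [e, e2] at h
  have hb := hB y z
  set D := B y - B z
  rw [inner_sub_right, inner_smul_right, inner_sub_left _ r (V r), inner_sub_left _ r D,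
    real_inner_comm (V r) (y - z), real_inner_comm (V r) r, aux_symm hV r (y - z)] at h
  have h1 := real_inner_le_norm r D
  have h2 : ‖r‖ * ‖D‖ ≤ β * ‖D‖^2 + ‖r‖^2 / (4 * β) := by
    have : β * ‖D‖^2 + ‖r‖^2 / (4 * β) - ‖r‖ * ‖D‖ = (2 * β * ‖D‖ - ‖r‖)^2 / (4 * β) := by
      field_simp; ring
    have : 0 ≤ (2 * β * ‖D‖ - ‖r‖)^2 / (4 * β) := by positivity
    linarith
  have h3 : ‖r‖^2 / (4 * β) ≤ ‖U‖ * ⟪V r, r⟫ / (4 * β) := by gcongr; exact hN r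
  have h4 : 0 ≤ 1 / γ * (⟪V (y - z), r⟫ - ⟪V r, r⟫) + ‖U‖ * ⟪V r, r⟫ / (4 * β) := by linarith
  have h5 := mul_nonneg (by positivity : 0 ≤ 2 * γ) h4
  have e3 : 2 * γ * (1 / γ * (⟪V (y - z), r⟫ - ⟪V r, r⟫) + ‖U‖ * ⟪V r, r⟫ / (4 * β))
     = 2 * ⟪V (y - z), r⟫ - (2 - γ * ‖U‖ / (2 * β)) * ⟪V r, r⟫ := by field_simp; ring
  linarith

lemma aux_err {V : H →L[ℝ] H} (hV : IsSelfAdjoint V) (hVp : ∀ x, 0 ≤ ⟪V x, x⟫)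
    {ε : ℝ} (hε : 0 < ε) (s e : H) (he : ⟪V e, e⟫ ≤ ε^2) :
    ⟪V (s + e), s + e⟫ ≤ (1 + ε) * ⟪V s, s⟫ + (ε + ε^2) := by
  have h1 := aux_quad hV s e 1
  rw [one_smul] at h1
  have h2 := hVp (e + (-ε) • s)
  rw [aux_quad hV, aux_symm hV e s] at h2
  have h3 : ε * (2 * ⟪V s, e⟫) ≤ ε * (ε * (1 + ⟪V s, s⟫)) := by linarith
  have h4 := le_of_mul_le_mul_left h3 hε
  linarith

end ops

theorem fb_residual_tendsto_zero
    {H : Type*} [NormedAddCommGroup H] [InnerProductSpace ℝ H] [CompleteSpace H]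
    (β : ℝ) (hβ : 0 < β) (B : H → H)
    (hB : ∀ x y : H, ⟪x - y, B x - B y⟫ ≥ β * ‖B x - B y‖ ^ 2)
    (A : H → Set H)
    (hAmono : ∀ x y u v : H, u ∈ A x → v ∈ A y → ⟪x - y, u - v⟫ ≥ 0)
    (hAmax : ∀ z w : H, (∀ x : H, ∀ u ∈ A x, ⟪x - z, u - w⟫ ≥ 0) → w ∈ A z)
    (hΩ : {z : H | ∃ u ∈ A z, u + B z = 0}.Nonempty)
    (α : ℝ) (hα : 0 < α) (μ : ℝ) (hμ : 0 < μ)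
    (U V : ℕ → H →L[ℝ] H)
    (hU : ∀ k, IsSelfAdjoint (U k))
    (hUpos : ∀ k, ∀ x : H, ⟪U k x, x⟫ ≥ α * ‖x‖ ^ 2)
    (hV : ∀ k, IsSelfAdjoint (V k))
    (hVU : ∀ k, (V k).comp (U k) = ContinuousLinearMap.id ℝ H)
    (hUV : ∀ k, (U k).comp (V k) = ContinuousLinearMap.id ℝ H)
    (hUnorm : ∀ k, ‖U k‖ ≤ μ)
    (η : ℕ → ℝ) (hη0 : ∀ k, 0 ≤ η k) (hηsum : Summable η)
    (hUmono : ∀ k, ∀ z : H, (1 + η k) * ⟪U (k + 1) z, z⟫ ≥ ⟪U k z, z⟫)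
    (γ lam αk : ℕ → ℝ)
    (hγ : ∀ k, 0 < γ k ∧ γ k < 2 * β / ‖U k‖)
    (hαk : ∀ k, αk k = 2 * β / (4 * β - γ k * ‖U k‖))
    (hlam : ∀ k, 0 < lam k ∧ lam k < 1 / αk k)
    (a b : ℕ → H)
    (ha : Summable (fun k => lam k * ‖a k‖))
    (hb : Summable (fun k => lam k * ‖b k‖))
    (J : ℕ → H → H)
    (hJ : ∀ k, ∀ y : H, (1 / γ k) • (V k (y - J k y)) ∈ A (J k y))
    (x : ℕ → H)
    (hx : ∀ k, x (k + 1) =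
      x k + lam k • (J k (x k - γ k • U k (B (x k) + b k)) + a k - x k))
    (lamlb τ : ℝ) (hlamlb : 0 < lamlb) (hτ : 0 < τ)
    (hlam' : ∀ k, lamlb ≤ lam k ∧ lam k ≤ 1 / αk k - τ) :
    Tendsto (fun k => ‖x k - J k (x k - γ k • U k (B (x k)))‖) atTop (nhds 0) := by
  obtain ⟨z, u, hu, huz⟩ := hΩ
  have hz : -B z ∈ A z := by rwa [← eq_neg_of_add_eq_zero_left huz]
  have hVU' : ∀ k y, V k (U k y) = y := fun k y => by
    have := congrArg (fun f : H →L[ℝ] H => f y) (hVU k); simpa using this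
  have hUV' : ∀ k y, U k (V k y) = y := fun k y => by
    have := congrArg (fun f : H →L[ℝ] H => f y) (hUV k); simpa using this
  have hNpos : ∀ k, 0 < ‖U k‖ := fun k => by
    rcases (norm_nonneg (U k)).eq_or_lt with h | h
    · have := hγ k
      rw [← h, div_zero] at this
      linarith
    · exact h
  have hVp : ∀ k y, 0 ≤ ⟪V k y, y⟫ := fun k => aux_Vpos hα (hUV' k) (hUpos k)
  have hVlow : ∀ k y, ‖y‖^2 ≤ ‖U k‖ * ⟪V k y, y⟫ := fun k =>
    aux_Vlow hα (hU k) (hUV' k) (hUpos k) (hNpos k)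
  have hNα : ∀ k, α ≤ ‖U k‖ := fun k => by
    obtain ⟨w, hw⟩ : ∃ w : H, w ≠ 0 := by
      by_contra! hcon
      have : U k = 0 := by ext w; rw [hcon w]; simp
      have h0 := hNpos k
      rw [this, norm_zero] at h0
      exact lt_irrefl _ h0
    have h1 := (hUpos k w).le.trans (aux_Uin (U k) w)
    exact le_of_mul_le_mul_right h1 (by have := norm_pos_iff.2 hw; positivity)
  have hγb : ∀ k, γ k ≤ 2 * β / α := fun k =>
    (hγ k).2.le.trans (by gcongr; exact hNα k)
  obtain ⟨C, hC0, hCa, hCb⟩ : ∃ C : ℝ, 0 ≤ C ∧ 2 * α⁻¹ ≤ C^2 ∧ 2 * ((2 * β / α)^2 * μ) ≤ C^2 := by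
    refine ⟨1 + 2 * α⁻¹ + 2 * ((2 * β / α)^2 * μ), by positivity, ?_, ?_⟩ <;>
    · have h1 : 0 ≤ α⁻¹ := by positivity
      have h2 : 0 ≤ (2 * β / α)^2 * μ := by positivity
      nlinarith [mul_nonneg h1 h2]
  set r : ℕ → H := fun k => x k - J k (x k - γ k • U k (B (x k))) with hr
  set D : ℕ → ℝ := fun k => ⟪V k (x k - z), x k - z⟫ with hD
  set ε : ℕ → ℝ := fun k => C * (lam k * ‖a k‖ + lam k * ‖b k‖) + (1/2)^k with hεd
  have sε : Summable ε := ((ha.add hb).mul_left C).add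
    (summable_geometric_of_lt_one (by norm_num) (by norm_num))
  have hε : ∀ k, 0 < ε k := fun k => by
    have := (hlam k).1
    simp only [hεd]; positivity
  have sε2 : Summable (fun k => ε k ^ 2) := by
    refine Summable.of_norm_bounded_eventually_nat sε ?_
    filter_upwards [sε.tendsto_atTop_zero.eventually (gt_mem_nhds zero_lt_one)] with k hk
    rw [Real.norm_of_nonneg (sq_nonneg _)]
    nlinarith [hε k]
  have sηε : ∀ f : ℕ → ℝ, (∀ k, 0 ≤ f k) → Summable f → Summable (fun k => η k * f k) := by
    intro f hf0 hf
    refine Summable.of_norm_bounded_eventually_nat hηsum ?_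
    filter_upwards [hf.tendsto_atTop_zero.eventually (gt_mem_nhds zero_lt_one)] with k hk
    rw [Real.norm_of_nonneg (mul_nonneg (hη0 k) (hf0 k))]
    nlinarith [hη0 k]
  have hδ : Summable (fun k => lamlb * τ * ⟪V k (r k), r k⟫) := by
    refine aux_RS D _ (fun k => η k + ε k + η k * ε k)
      (fun k => (ε k + ε k^2) + η k * (ε k + ε k^2)) ?_ ?_ ?_ ?_ ?_ ?_ ?_
    · intro k; have := hη0 k; have := hε k; positivity
    · intro k; have := hη0 k; have := hε k; positivity
    · exact (hηsum.add sε).add (sηε ε (fun k => (hε k).le) sε)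
    · exact (sε.add sε2).add (sηε _ (fun k => by have := hε k; positivity) (sε.add sε2))
    · exact fun k => hVp k _
    · exact fun k => mul_nonneg (by positivity) (hVp k _)
    · intro k
      have hstep := aux_step (hVlow k) (hVU' k) (hV k) hβ B hB A hAmono (hγ k).1 (J k) (hJ k) z hz
        (x k) _ (r k) rfl rfl
      have hα' : 1 / αk k = 2 - γ k * ‖U k‖ / (2 * β) := by
        rw [hαk]; field_simp; ring
      rw [← hα'] at hstep
      have hl := hlam' k
      have hq := aux_quad (hV k) (x k - z) (r k) (-lam k)
      set R := ⟪V k (r k), r k⟫ with hR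
      have hR0 : 0 ≤ R := hVp k _
      set s := x k - z + (-lam k) • r k with hs
      have hS : ⟪V k s, s⟫ ≤ D k - lamlb * τ * R := by
        rw [hq]
        have h1 := mul_le_mul_of_nonneg_left hstep (hlam k).1.le
        have h2 : lamlb * τ * R ≤ lam k * (1 / αk k - lam k) * R := by
          have h3 : τ ≤ 1 / αk k - lam k := by linarith
          exact mul_le_mul_of_nonneg_right
            (mul_le_mul hl.1 h3 hτ.le (hlam k).1.le) hR0
        simp only [hD]
        nlinarith
      set j := J k (x k - γ k • U k (B (x k) + b k)) - J k (x k - γ k • U k (B (x k))) with hj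
      have hjb : ⟪V k j, j⟫ ≤ (2 * β / α)^2 * μ * ‖b k‖^2 := by
        refine (aux_J (hV k) (hVp k) A hAmono (hγ k).1 (J k) (hJ k) _ _).trans ?_
        have e : x k - γ k • U k (B (x k) + b k) - (x k - γ k • U k (B (x k))) =
          (-γ k) • U k (b k) := by
          rw [map_add, smul_add, neg_smul]; abel
        rw [e, map_smul, hVU', inner_smul_left, inner_smul_right, real_inner_comm]
        have h1 : ⟪U k (b k), b k⟫ ≤ μ * ‖b k‖^2 := (aux_Uin _ _).trans (by gcongr; exact hUnorm k)
        have h2 : (γ k)^2 ≤ (2 * β / α)^2 := pow_le_pow_left₀ (hγ k).1.le (hγb k) 2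
        have h3 : 0 ≤ ⟪U k (b k), b k⟫ := by
          have := hUpos k (b k)
          have : 0 ≤ α * ‖b k‖^2 := by positivity
          linarith
        have h4 := mul_le_mul h2 h1 h3 (by positivity)
        simp
        linarith
      have hab : ⟪V k (a k), a k⟫ ≤ α⁻¹ * ‖a k‖^2 := aux_Vup hα (hUV' k) (hUpos k) _
      have hja : ⟪V k (j + a k), j + a k⟫ ≤ (C * (‖a k‖ + ‖b k‖))^2 := by
        have h1 := aux_quad (hV k) j (a k) 1
        have h2 := aux_quad (hV k) j (a k) (-1)
        have h3 := hVp k (j + (-1 : ℝ) • a k)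
        rw [one_smul] at h1
        have h4 := mul_le_mul_of_nonneg_right hCa (sq_nonneg ‖a k‖)
        have h5 := mul_le_mul_of_nonneg_right hCb (sq_nonneg ‖b k‖)
        have h6 : 0 ≤ C^2 * (‖a k‖ * ‖b k‖) := by positivity
        nlinarith
      have hE : ⟪V k (lam k • (j + a k)), lam k • (j + a k)⟫ ≤ ε k ^2 := by
        rw [map_smul, inner_smul_left, inner_smul_right]
        have hl0 := (hlam k).1
        calc _ = (lam k)^2 * ⟪V k (j + a k), j + a k⟫ := by simp; ring
          _ ≤ (lam k)^2 * (C * (‖a k‖ + ‖b k‖))^2 := by gcongr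
          _ = (C * (lam k * ‖a k‖ + lam k * ‖b k‖))^2 := by ring
          _ ≤ _ := by
            simp only [hεd]
            gcongr
            simp
      have hx' : x (k+1) - z = s + lam k • (j + a k) := by
        rw [hx k, hs, hj]
        simp only [hr]
        module
      have hfin := aux_err (hV k) (hVp k) (hε k) s _ hE
      rw [← hx'] at hfin
      have hη1 : 0 < 1 + η k := by linarith [hη0 k]
      have hm := aux_Vmono hα hη1 (hU k) (hUV' k) (hUV' (k+1)) (hUpos k) (hUmono k) (x (k+1) - z)
      have h1 := mul_le_mul_of_nonneg_left hfin hη1.le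
      have hεk := hε k
      have hηk := hη0 k
      have h2 : (1 + η k) * ((1 + ε k) * ⟪V k s, s⟫) ≤
        (1 + η k) * ((1 + ε k) * (D k - lamlb * τ * R)) := by gcongr
      have h3 : 0 ≤ (η k + ε k + η k * ε k) * (lamlb * τ * R) := by positivity
      have h4 : D (k+1) = ⟪V (k+1) (x (k+1) - z), x (k+1) - z⟫ := rfl
      rw [h4]
      clear_value R s D ε j
      linarith
  have hlim := (hδ.tendsto_atTop_zero).const_mul (μ * (lamlb * τ)⁻¹)
  rw [mul_zero] at hlim
  have hsq : Tendsto (fun k => ‖r k‖^2) atTop (nhds 0) := by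
    refine squeeze_zero (fun k => sq_nonneg _) (fun k => ?_) hlim
    calc ‖r k‖^2 ≤ ‖U k‖ * ⟪V k (r k), r k⟫ := hVlow k _
      _ ≤ μ * ⟪V k (r k), r k⟫ := mul_le_mul_of_nonneg_right (hUnorm k) (hVp k _)
      _ = _ := by field_simp
  have := hsq.sqrt
  simpa [Real.sqrt_sq] using this
end

section
/- Under the hypotheses listed in the context, suppose in addition there exist λ̲ > 0 and τ > 0 with λ̲ ≤ λ_k ≤ 1/α_k − τ for all k, and there exists γ̲ > 0 with γ_k ≥ γ̲ for all k. Then there exists p ∈ Ω such that the iterates x_k converge weakly to p, i.e., ⟨x_k, y⟩ → ⟨p, y⟩ for every y ∈ H. -/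
open RealInnerProductSpace Filter

section FB
variable {H : Type*} [NormedAddCommGroup H] [InnerProductSpace ℝ H]

theorem fb_cs (T : H →L[ℝ] H) (hs : ∀ x y, ⟪T x, y⟫ = ⟪x, T y⟫) (hp : ∀ x, 0 ≤ ⟪T x, x⟫)
    (x y : H) : ⟪T x, y⟫ ^ 2 ≤ ⟪T x, x⟫ * ⟪T y, y⟫ := by
  have h : ∀ t : ℝ, 0 ≤ ⟪T y, y⟫ * (t * t) + (2 * ⟪T x, y⟫) * t + ⟪T x, x⟫ := by
    intro t
    have := hp (x + t • y)
    have e : ⟪T y, x⟫ = ⟪T x, y⟫ := by rw [hs, real_inner_comm]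
    simp only [map_add, map_smul, inner_add_left, inner_add_right, real_inner_smul_left,
      real_inner_smul_right, e] at this
    linarith
  have := discrim_le_zero h
  unfold discrim at this
  nlinarith

theorem fb_normsq (T : H →L[ℝ] H) (hs : ∀ x y, ⟪T x, y⟫ = ⟪x, T y⟫) (hp : ∀ x, 0 ≤ ⟪T x, x⟫)
    (C : ℝ) (hC : ∀ x, ⟪T x, x⟫ ≤ C * ‖x‖ ^ 2)
    (x : H) : ‖T x‖ ^ 2 ≤ C * ⟪T x, x⟫ := by
  have h := fb_cs T hs hp x (T x)
  rw [real_inner_self_eq_norm_sq] at h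
  have h2 := hC (T x)
  have h3 := hp x
  rcases eq_or_ne (T x) 0 with h0 | h0
  · simp [h0]
  · have : 0 < ‖T x‖ ^ 2 := by positivity
    have h4 : ‖T x‖ ^ 2 * ‖T x‖ ^ 2 ≤ ‖T x‖ ^ 2 * (C * ⟪T x, x⟫) := by nlinarith
    exact le_of_mul_le_mul_left h4 this

theorem fb_opbound (T : H →L[ℝ] H) (x : H) : ⟪T x, x⟫ ≤ ‖T‖ * ‖x‖ ^ 2 := by
  have h1 := real_inner_le_norm (T x) x
  have h2 := T.le_opNorm x
  nlinarith [norm_nonneg x]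

/-- seminorm induced by `T`. -/
noncomputable def fbN (T : H →L[ℝ] H) (x : H) : ℝ := √⟪T x, x⟫

theorem fbN_nonneg (T : H →L[ℝ] H) (x : H) : 0 ≤ fbN T x := Real.sqrt_nonneg _

theorem fbN_sq (T : H →L[ℝ] H) (hp : ∀ x, 0 ≤ ⟪T x, x⟫) (x : H) : fbN T x ^ 2 = ⟪T x, x⟫ :=
  Real.sq_sqrt (hp x)

theorem fbN_inner_le (T : H →L[ℝ] H) (hs : ∀ x y, ⟪T x, y⟫ = ⟪x, T y⟫)
    (hp : ∀ x, 0 ≤ ⟪T x, x⟫) (x y : H) : ⟪T x, y⟫ ≤ fbN T x * fbN T y := by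
  apply le_of_sq_le_sq _ (mul_nonneg (fbN_nonneg _ _) (fbN_nonneg _ _))
  rw [mul_pow, fbN_sq T hp, fbN_sq T hp]
  exact fb_cs T hs hp x y

theorem fbN_add (T : H →L[ℝ] H) (hs : ∀ x y, ⟪T x, y⟫ = ⟪x, T y⟫)
    (hp : ∀ x, 0 ≤ ⟪T x, x⟫) (x y : H) : fbN T (x + y) ≤ fbN T x + fbN T y := by
  apply le_of_sq_le_sq _ (add_nonneg (fbN_nonneg _ _) (fbN_nonneg _ _))
  have e : ⟪T y, x⟫ = ⟪T x, y⟫ := by rw [hs, real_inner_comm]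
  have := fbN_inner_le T hs hp x y
  have h1 := fbN_sq T hp x
  have h2 := fbN_sq T hp y
  rw [fbN_sq T hp]
  simp only [map_add, inner_add_left, inner_add_right, e]
  nlinarith

theorem fbN_smul (T : H →L[ℝ] H) (c : ℝ) (hc : 0 ≤ c) (x : H) :
    fbN T (c • x) = c * fbN T x := by
  unfold fbN
  rw [map_smul, real_inner_smul_left, real_inner_smul_right, ← mul_assoc,
    Real.sqrt_mul (mul_nonneg hc hc), Real.sqrt_mul_self hc]

/-- facts about the inverse operator -/
theorem fb_inv (U V : H →L[ℝ] H) (hs : ∀ x y, ⟪U x, y⟫ = ⟪x, U y⟫)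
    (α : ℝ) (hα : 0 < α) (hUpos : ∀ x, ⟪U x, x⟫ ≥ α * ‖x‖ ^ 2)
    (hUV : ∀ x, U (V x) = x) :
    (∀ x, 0 ≤ ⟪V x, x⟫) ∧ (∀ x, ‖V x‖ ≤ ‖x‖ / α) ∧ (∀ x, ⟪V x, x⟫ ≤ ‖x‖ ^ 2 / α) ∧
    (∀ x, ‖x‖ ^ 2 ≤ ‖U‖ * ⟪V x, x⟫) ∧ (∀ x y, ⟪V x, y⟫ = ⟪x, V y⟫) := by
  have h0 : ∀ x, α * ‖V x‖ ^ 2 ≤ ⟪V x, x⟫ := fun x => by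
    have := hUpos (V x)
    rw [hUV, real_inner_comm] at this
    exact this
  have hp : ∀ x, 0 ≤ ⟪V x, x⟫ := fun x => le_trans (by positivity) (h0 x)
  have h1 : ∀ x, ‖V x‖ ≤ ‖x‖ / α := fun x => by
    rw [le_div_iff₀ hα]
    have h2 := real_inner_le_norm (V x) x
    have h3 := h0 x
    rcases (norm_nonneg (V x)).eq_or_lt with h | h
    · rw [← h]; simp
    · have : ‖V x‖ * (‖V x‖ * α) ≤ ‖V x‖ * ‖x‖ := by nlinarith
      exact le_of_mul_le_mul_left this h
  refine ⟨hp, h1, ?_, ?_, ?_⟩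
  · intro x
    have h2 := real_inner_le_norm (V x) x
    have h3 := mul_le_mul_of_nonneg_right (h1 x) (norm_nonneg x)
    calc _ ≤ _ := h2
      _ ≤ _ := h3
      _ = _ := by ring
  · intro x
    have := fb_normsq U hs (fun x => le_trans (by positivity) (hUpos x)) ‖U‖ (fb_opbound U) (V x)
    rwa [hUV, real_inner_comm] at this
  · intro x y
    have := hs (V x) (V y)
    rw [hUV, hUV] at this
    exact this.symm

theorem fb_antitone (U V U' V' : H →L[ℝ] H) (hs : ∀ x y, ⟪U x, y⟫ = ⟪x, U y⟫)
    (hp : ∀ x, 0 ≤ ⟪U x, x⟫) (hUV : ∀ x, U (V x) = x) (hUV' : ∀ x, U' (V' x) = x)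
    (hVp : ∀ x, 0 ≤ ⟪V x, x⟫) (hV' : ∀ x, 0 ≤ ⟪V' x, x⟫)
    (c : ℝ) (hc : 0 ≤ c) (h : ∀ z, c * ⟪U' z, z⟫ ≥ ⟪U z, z⟫) (x : H) :
    ⟪V' x, x⟫ ≤ c * ⟪V x, x⟫ := by
  have h1 := fb_cs U hs hp (V x) (V' x)
  have h2 := h (V' x)
  have h3 := hVp x
  rw [hUV] at h1
  rw [hUV'] at h2
  have e1 : ⟪x, V' x⟫ = ⟪V' x, x⟫ := real_inner_comm _ _
  have e2 : ⟪x, V x⟫ = ⟪V x, x⟫ := real_inner_comm _ _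
  rw [e1] at h1 h2
  rw [e2] at h1
  rcases (hV' x).eq_or_lt with h0 | h0
  · rw [← h0]; exact mul_nonneg hc h3
  · have : ⟪V' x, x⟫ * ⟪V' x, x⟫ ≤ ⟪V' x, x⟫ * (c * ⟪V x, x⟫) := by nlinarith
    exact le_of_mul_le_mul_left this h0

/-- one exact forward-backward step -/
theorem fb_step (U V : H →L[ℝ] H) (hVs : ∀ x y, ⟪V x, y⟫ = ⟪x, V y⟫)
    (hVp : ∀ x, ‖x‖ ^ 2 ≤ ‖U‖ * ⟪V x, x⟫) (β γ : ℝ) (hβ : 0 < β) (hγ : 0 < γ)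
    (l : ℝ) (hl : 0 < l)
    (x z p bx bp : H) (hc : ⟪x - p, bx - bp⟫ ≥ β * ‖bx - bp‖ ^ 2)
    (hm : ⟪z - p, ((1 / γ) • V (x - z) - bx) - (-bp)⟫ ≥ 0) :
    ⟪V (x + l • (z - x) - p), x + l • (z - x) - p⟫ ≤
      ⟪V (x - p), x - p⟫ - l * (2 - γ * ‖U‖ / (2 * β) - l) * ⟪V (z - x), z - x⟫ := by
  set d := bx - bp with hd
  set e := z - x with he
  set f := x - p with hf
  have e1 : z - p = f + e := by simp [he, hf]
  have e2 : (1 / γ) • V (x - z) - bx - (-bp) = -((1 / γ) • V e + d) := by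
    have : x - z = -e := by simp [he]
    rw [this, map_neg, smul_neg, hd]; abel
  have e3 : x + l • e - p = f + l • e := by simp [hf]; abel
  rw [e1, e2] at hm
  rw [e3]
  have s1 : ⟪V e, f⟫ = ⟪V f, e⟫ := by rw [hVs, real_inner_comm]
  have s2 : ⟪e, V e⟫ = ⟪V e, e⟫ := by rw [real_inner_comm]
  have s3 : ⟪f, V e⟫ = ⟪V f, e⟫ := by rw [hVs]
  simp only [map_add, map_smul, inner_add_left, inner_add_right, real_inner_smul_left,
      real_inner_smul_right, inner_neg_right, s1, s2, s3] at hm ⊢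
  have h1 : -(‖e‖ * ‖d‖) ≤ ⟪e, d⟫ := by
    have := abs_real_inner_le_norm e d
    exact (abs_le.1 this).1
  have h2 : ‖e‖ * ‖d‖ ≤ β * ‖d‖ ^ 2 + ‖e‖ ^ 2 / (4 * β) := by
    have : β * ‖d‖ ^ 2 + ‖e‖ ^ 2 / (4 * β) - ‖e‖ * ‖d‖ = (2 * β * ‖d‖ - ‖e‖) ^ 2 / (4 * β) := by
      field_simp; ring
    have h3 : 0 ≤ (2 * β * ‖d‖ - ‖e‖) ^ 2 / (4 * β) := by positivity
    linarith
  have h3 : ‖e‖ ^ 2 / (4 * β) ≤ ‖U‖ * ⟪V e, e⟫ / (4 * β) := by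
    gcongr; exact hVp e
  have h4 : 1 / γ * (⟪V f, e⟫ + ⟪V e, e⟫) ≤ ‖U‖ * ⟪V e, e⟫ / (4 * β) := by linarith
  have h5 : ⟪V f, e⟫ + ⟪V e, e⟫ ≤ γ * (‖U‖ * ⟪V e, e⟫ / (4 * β)) := by
    rw [one_div, inv_mul_le_iff₀ hγ] at h4; exact h4
  have h6 : 2 * l * (⟪V f, e⟫ + ⟪V e, e⟫) ≤ 2 * l * (γ * (‖U‖ * ⟪V e, e⟫ / (4 * β))) := by gcongr
  have h7 : 2 * l * (γ * (‖U‖ * ⟪V e, e⟫ / (4 * β))) = l * (γ * ‖U‖ / (2 * β)) * ⟪V e, e⟫ := by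
    field_simp; ring
  rw [h7] at h6
  linarith

theorem fb_nonexp (V : H →L[ℝ] H) (hVs : ∀ x y, ⟪V x, y⟫ = ⟪x, V y⟫)
    (hVp : ∀ x, 0 ≤ ⟪V x, x⟫) (γ : ℝ) (hγ : 0 < γ) (y y' z z' : H)
    (hm : ⟪z - z', (1 / γ) • V (y - z) - (1 / γ) • V (y' - z')⟫ ≥ 0) :
    fbN V (z - z') ≤ fbN V (y - y') := by
  have h1 : (1 / γ) • V (y - z) - (1 / γ) • V (y' - z') = (1 / γ) • (V (y - y') - V (z - z')) := by
    simp only [map_sub, smul_sub]; abel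
  rw [h1, real_inner_smul_right, inner_sub_right, real_inner_comm _ (z - z'),
    real_inner_comm _ (z - z')] at hm
  have h2 : 0 ≤ ⟪V (y - y'), z - z'⟫ - ⟪V (z - z'), z - z'⟫ :=
    nonneg_of_mul_nonneg_right hm (by positivity)
  have h3 := fbN_inner_le V hVs hVp (y - y') (z - z')
  have h4 := fbN_sq V hVp (z - z')
  rcases (fbN_nonneg V (z - z')).eq_or_lt with h | h
  · rw [← h]; exact fbN_nonneg _ _
  · have : fbN V (z - z') * fbN V (z - z') ≤ fbN V (y - y') * fbN V (z - z') := by nlinarith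
    exact le_of_mul_le_mul_right this h

theorem fb_prod (η : ℕ → ℝ) (hη0 : ∀ k, 0 ≤ η k) (hη : Summable η) :
    ∃ P : ℕ → ℝ, (∀ k, P (k + 1) = P k * (1 + η k)) ∧ (∀ k, 1 ≤ P k) ∧
      ∃ L, Tendsto P atTop (nhds L) := by
  set P : ℕ → ℝ := fun k => ∏ j ∈ Finset.range k, (1 + η j) with hP
  have hPs : ∀ k, P (k + 1) = P k * (1 + η k) := fun k => Finset.prod_range_succ _ _
  have hP1 : ∀ k, 1 ≤ P k := by
    intro k
    induction k with
    | zero => simp [hP]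
    | succ k ih => rw [hPs]; nlinarith [hη0 k]
  have hPm : Monotone P := monotone_nat_of_le_succ fun k => by
    rw [hPs]; nlinarith [hη0 k, hP1 k]
  have hPb : BddAbove (Set.range P) := by
    refine ⟨Real.exp (∑' j, η j), ?_⟩
    rintro _ ⟨k, rfl⟩
    calc P k ≤ ∏ j ∈ Finset.range k, Real.exp (η j) :=
          Finset.prod_le_prod (fun j _ => by linarith [hη0 j])
            (fun j _ => by linarith [Real.add_one_le_exp (η j)])
      _ = Real.exp (∑ j ∈ Finset.range k, η j) := (Real.exp_sum _ _).symm
      _ ≤ _ := Real.exp_le_exp.2 (hη.sum_le_tsum _ fun j _ => hη0 j)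
  exact ⟨P, hPs, hP1, _, tendsto_atTop_ciSup hPm hPb⟩

/-- deterministic Robbins–Siegmund -/
theorem fb_rs (η ε r : ℕ → ℝ) (hη0 : ∀ k, 0 ≤ η k) (hη : Summable η) (hε0 : ∀ k, 0 ≤ ε k)
    (hε : Summable ε) (hr0 : ∀ k, 0 ≤ r k) (hr : ∀ k, r (k + 1) ≤ (1 + η k) * (r k + ε k)) :
    ∃ l, Tendsto r atTop (nhds l) := by
  obtain ⟨P, hPs, hP1, L, hPl⟩ := fb_prod η hη0 hη
  set s : ℕ → ℝ := fun k => r k / P k - ∑ j ∈ Finset.range k, ε j with hs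
  have hsa : Antitone s := antitone_nat_of_succ_le fun k => by
    simp only [hs, Finset.sum_range_succ]
    have h1 := hP1 k
    have h0 := hη0 k
    have : r (k + 1) / P (k + 1) ≤ r k / P k + ε k := by
      rw [hPs, div_le_iff₀ (by positivity)]
      have h2 : (r k / P k + ε k) * (P k * (1 + η k)) = (1 + η k) * (r k + ε k * P k) := by
        field_simp
      rw [h2]
      refine (hr k).trans ?_
      have := hε0 k
      gcongr
      nlinarith
    linarith
  have hsb : BddBelow (Set.range s) := by
    refine ⟨-∑' j, ε j, ?_⟩
    rintro _ ⟨k, rfl⟩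
    have h1 := hε.sum_le_tsum (Finset.range k) fun j _ => hε0 j
    have h2 : 0 ≤ r k / P k := div_nonneg (hr0 k) (by linarith [hP1 k])
    simp only [hs]; linarith
  have hsl := tendsto_atTop_ciInf hsa hsb
  refine ⟨_, ((hsl.add hε.hasSum.tendsto_sum_nat).mul hPl).congr fun k => ?_⟩
  have := hP1 k
  simp only [hs, sub_add_cancel]
  field_simp

theorem fb_strong [CompleteSpace H] (η : ℕ → ℝ) (hη0 : ∀ k, 0 ≤ η k) (hη : Summable η)
    (V : ℕ → H →L[ℝ] H) (hs : ∀ k x y, ⟪V k x, y⟫ = ⟪x, V k y⟫) (hp : ∀ k x, 0 ≤ ⟪V k x, x⟫)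
    (C : ℝ) (hC : ∀ k x, ⟪V k x, x⟫ ≤ C * ‖x‖ ^ 2) (hC0 : 0 ≤ C)
    (hm : ∀ k x, ⟪V (k + 1) x, x⟫ ≤ (1 + η k) * ⟪V k x, x⟫) (x : H) :
    ∃ v, Tendsto (fun k => V k x) atTop (nhds v) := by
  obtain ⟨P, hPs, hP1, L, hPl⟩ := fb_prod η hη0 hη
  have hP0 : ∀ k, 0 < P k := fun k => by linarith [hP1 k]
  set W : ℕ → H →L[ℝ] H := fun k => (P k)⁻¹ • V k with hW
  have hWi : ∀ k y, ⟪W k y, y⟫ = (P k)⁻¹ * ⟪V k y, y⟫ := fun k y => by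
    simp [hW, real_inner_smul_left]
  have hW0 : ∀ k y, 0 ≤ ⟪W k y, y⟫ := fun k y => by
    rw [hWi]; exact mul_nonneg (inv_nonneg.2 (hP0 k).le) (hp k y)
  have hWa : ∀ y, Antitone fun k => ⟪W k y, y⟫ := fun y => antitone_nat_of_succ_le fun k => by
    rw [hWi, hWi, hPs]
    have h1 : 0 < 1 + η k := by linarith [hη0 k]
    have h2 := hP0 k
    rw [inv_mul_le_iff₀ (by positivity)]
    refine (hm k y).trans (le_of_eq ?_)
    field_simp
  have hWC : ∀ k y, ⟪W k y, y⟫ ≤ C * ‖y‖ ^ 2 := fun k y => by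
    rw [hWi]
    have h1 : (P k)⁻¹ ≤ 1 := inv_le_one_of_one_le₀ (hP1 k)
    have := mul_le_mul_of_nonneg_right h1 (hp k y)
    linarith [hC k y]
  have hbd : ∀ k m, k ≤ m → ‖W k x - W m x‖ ^ 2 ≤ C * (⟪W k x, x⟫ - ⟪W m x, x⟫) := by
    intro k m hkm
    have := fb_normsq (W k - W m) (fun y z => by
        simp [hW, inner_sub_left, inner_sub_right, real_inner_smul_left, real_inner_smul_right, hs])
      (fun y => by
        have := hWa y hkm
        simp only [_root_.sub_apply, inner_sub_left] at this ⊢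
        linarith) C (fun y => by
        have := hWC k y
        have := hW0 m y
        simp only [_root_.sub_apply, inner_sub_left] at this ⊢
        linarith) x
    simpa only [_root_.sub_apply, inner_sub_left] using this
  have hlim := tendsto_atTop_ciInf (hWa x) ⟨0, by rintro _ ⟨k, rfl⟩; exact hW0 k x⟩
  set ℓ := ⨅ k, ⟪W k x, x⟫ with hℓ
  have hle : ∀ m, ℓ ≤ ⟪W m x, x⟫ := fun m =>
    ciInf_le ⟨0, by rintro _ ⟨k, rfl⟩; exact hW0 k x⟩ m
  have hcau : CauchySeq fun k => W k x := by
    refine cauchySeq_of_le_tendsto_0' (fun k => √(C * (⟪W k x, x⟫ - ℓ))) (fun k m hkm => ?_) ?_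
    · rw [dist_eq_norm]
      apply Real.le_sqrt_of_sq_le
      refine (hbd k m hkm).trans ?_
      gcongr
      exact hle m
    · have := ((hlim.sub_const ℓ).const_mul C).sqrt
      simpa using this
  obtain ⟨w, hw⟩ := cauchySeq_tendsto_of_complete hcau
  refine ⟨L • w, (hPl.smul hw).congr fun k => ?_⟩
  simp [hW, smul_smul, (hP0 k).ne']

theorem fb_weak [CompleteSpace H] (F : Ultrafilter ℕ) (x : ℕ → H) (M : ℝ) (hM : ∀ k, ‖x k‖ ≤ M) :
    ∃ p, ∀ y, Tendsto (fun k => ⟪x k, y⟫) F (nhds ⟪p, y⟫) := by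
  have hb : ∀ y k, |⟪x k, y⟫| ≤ M * ‖y‖ := fun y k =>
    (abs_real_inner_le_norm _ _).trans (by gcongr; exact hM k)
  have h : ∀ y, ∃ t : ℝ, Tendsto (fun k => ⟪x k, y⟫) F (nhds t) := by
    intro y
    have := (isCompact_Icc (a := -(M * ‖y‖)) (b := M * ‖y‖)).ultrafilter_le_nhds
      (F.map fun k => ⟪x k, y⟫) (by
        rw [le_principal_iff]
        exact Filter.mem_map.2 (Filter.univ_mem' fun k => abs_le.1 (hb y k)))
    obtain ⟨t, _, ht⟩ := this
    exact ⟨t, ht⟩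
  choose f hf using h
  let g : H →ₗ[ℝ] ℝ :=
    { toFun := f
      map_add' := fun y z => tendsto_nhds_unique (hf (y + z))
        (by simpa only [inner_add_right] using (hf y).add (hf z))
      map_smul' := fun c y => tendsto_nhds_unique (hf (c • y))
        (by simpa only [real_inner_smul_right, RingHom.id_apply, smul_eq_mul] using (hf y).const_mul c) }
  let G : H →L[ℝ] ℝ := g.mkContinuous M fun y =>
    le_of_tendsto (hf y).abs (Filter.Eventually.of_forall (hb y))
  refine ⟨(InnerProductSpace.toDual ℝ H).symm G, fun y => ?_⟩
  rw [InnerProductSpace.toDual_symm_apply]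
  exact hf y

/-- product of weakly convergent bounded and strongly convergent -/
theorem fb_ws (F : Filter ℕ) (x v : ℕ → H) (p w : H) (M : ℝ) (hM : ∀ k, ‖x k‖ ≤ M)
    (hx : ∀ y, Tendsto (fun k => ⟪x k, y⟫) F (nhds ⟪p, y⟫)) (hv : Tendsto v F (nhds w)) :
    Tendsto (fun k => ⟪x k, v k⟫) F (nhds ⟪p, w⟫) := by
  have h1 : Tendsto (fun k => ⟪x k, v k - w⟫) F (nhds 0) := by
    apply squeeze_zero_norm (a := fun k => M * ‖v k - w‖)
    · intro k
      exact (norm_inner_le_norm _ _).trans (by gcongr; exact hM k)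
    · have := ((hv.sub_const w).norm).const_mul M
      simpa using this
  have := h1.add (hx w)
  simpa [inner_sub_right] using this

theorem fb_demi (F : Filter ℕ) [F.NeBot] (A : H → Set H)
    (hAmono : ∀ x y u v : H, u ∈ A x → v ∈ A y → ⟪x - y, u - v⟫ ≥ 0)
    (β : ℝ) (hβ : 0 < β) (B : H → H)
    (hB : ∀ x y : H, ⟪x - y, B x - B y⟫ ≥ β * ‖B x - B y‖ ^ 2)
    (U V : H →L[ℝ] H) (hVp : ∀ x, ‖x‖ ^ 2 ≤ ‖U‖ * ⟪V x, x⟫) (γ : ℝ) (hγ : 0 < γ)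
    (hγU : γ * ‖U‖ < 2 * β) (hVU : ∀ x, V (U x) = x) (J : H → H)
    (hJ : ∀ y : H, (1 / γ) • (V (y - J y)) ∈ A (J y))
    (z w : ℕ → H) (p : H) (M : ℝ) (hM : ∀ k, ‖z k‖ ≤ M)
    (hz : ∀ y, Tendsto (fun k => ⟪z k, y⟫) F (nhds ⟪p, y⟫)) (hw : Tendsto w F (nhds 0))
    (hzw : ∀ k, w k - B (z k) ∈ A (z k)) : -B p ∈ A p := by
  set q := J (p - γ • U (B p)) with hq
  have hqA : (1 / γ) • V (p - q) - B p ∈ A q := by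
    have := hJ (p - γ • U (B p))
    rw [← hq] at this
    convert this using 1
    simp only [map_sub, map_smul, hVU, smul_sub, smul_smul]
    rw [one_div, inv_mul_cancel₀ hγ.ne', one_smul]
    abel
  set c := p - q with hc
  have h1 : ∀ k, 1 / γ * ⟪z k - q, V c⟫ ≤ ⟪z k - q, w k⟫ + ‖c‖ ^ 2 / (4 * β) := by
    intro k
    have hm := hAmono _ _ _ _ (hzw k) hqA
    have hb := hB (z k) p
    set d := B (z k) - B p with hd
    have e1 : w k - B (z k) - ((1 / γ) • V c - B p) = w k - (1 / γ) • V c - d := by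
      rw [hd]; abel
    rw [e1] at hm
    simp only [inner_sub_right, real_inner_smul_right] at hm
    have e2 : ⟪z k - q, d⟫ = ⟪z k - p, d⟫ + ⟪c, d⟫ := by
      rw [← inner_add_left, hc]; simp
    have h1 : -(‖c‖ * ‖d‖) ≤ ⟪c, d⟫ := (abs_le.1 (abs_real_inner_le_norm c d)).1
    have h2 : ‖c‖ * ‖d‖ ≤ β * ‖d‖ ^ 2 + ‖c‖ ^ 2 / (4 * β) := by
      have : β * ‖d‖ ^ 2 + ‖c‖ ^ 2 / (4 * β) - ‖c‖ * ‖d‖ = (2 * β * ‖d‖ - ‖c‖) ^ 2 / (4 * β) := by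
        field_simp; ring
      have h3 : 0 ≤ (2 * β * ‖d‖ - ‖c‖) ^ 2 / (4 * β) := by positivity
      linarith
    linarith
  have t1 : Tendsto (fun k => 1 / γ * ⟪z k - q, V c⟫) F (nhds (1 / γ * ⟪c, V c⟫)) := by
    simp only [hc, inner_sub_left]
    exact (((hz _).sub_const _).const_mul _)
  have t2 : Tendsto (fun k => ⟪z k - q, w k⟫ + ‖c‖ ^ 2 / (4 * β)) F
      (nhds (0 + ‖c‖ ^ 2 / (4 * β))) := by
    refine Tendsto.add_const _ ?_
    have h2 := fb_ws F z w p 0 M hM hz hw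
    have h3 : Tendsto (fun k => ⟪q, w k⟫) F (nhds ⟪q, 0⟫) :=
      Tendsto.inner tendsto_const_nhds hw
    simpa [inner_sub_left] using h2.sub h3
  have h2 := le_of_tendsto_of_tendsto' t1 t2 h1
  rw [zero_add, one_div, inv_mul_le_iff₀ hγ, real_inner_comm] at h2
  have h3 := hVp c
  have hc0 : ‖c‖ ^ 2 ≤ 0 := by
    have h4 : ‖U‖ * ⟪V c, c⟫ ≤ ‖U‖ * (γ * (‖c‖ ^ 2 / (4 * β))) := by gcongr
    have h5 : ‖U‖ * (γ * (‖c‖ ^ 2 / (4 * β))) = (γ * ‖U‖) * (‖c‖ ^ 2 / (4 * β)) := by ring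
    have h6 : (γ * ‖U‖) * (‖c‖ ^ 2 / (4 * β)) ≤ 2 * β * (‖c‖ ^ 2 / (4 * β)) := by gcongr
    have h7 : 2 * β * (‖c‖ ^ 2 / (4 * β)) = ‖c‖ ^ 2 / 2 := by field_simp; ring
    linarith
  have hc1 : c = 0 := by
    rw [← norm_eq_zero]; exact pow_eq_zero_iff (two_ne_zero) |>.1 (le_antisymm hc0 (by positivity))
  have hpq : p = q := sub_eq_zero.1 hc1
  rw [hc1] at hqA
  rw [← hpq] at hqA
  simpa using hqA

end FB

theorem fb_weak_convergence
    {H : Type*} [NormedAddCommGroup H] [InnerProductSpace ℝ H] [CompleteSpace H]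
    (β : ℝ) (hβ : 0 < β) (B : H → H)
    (hB : ∀ x y : H, ⟪x - y, B x - B y⟫ ≥ β * ‖B x - B y‖ ^ 2)
    (A : H → Set H)
    (hAmono : ∀ x y u v : H, u ∈ A x → v ∈ A y → ⟪x - y, u - v⟫ ≥ 0)
    (hAmax : ∀ z w : H, (∀ x : H, ∀ u ∈ A x, ⟪x - z, u - w⟫ ≥ 0) → w ∈ A z)
    (hΩ : {z : H | ∃ u ∈ A z, u + B z = 0}.Nonempty)
    (α : ℝ) (hα : 0 < α) (μ : ℝ) (hμ : 0 < μ)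
    (U V : ℕ → H →L[ℝ] H)
    (hU : ∀ k, IsSelfAdjoint (U k))
    (hUpos : ∀ k, ∀ x : H, ⟪U k x, x⟫ ≥ α * ‖x‖ ^ 2)
    (hV : ∀ k, IsSelfAdjoint (V k))
    (hVU : ∀ k, (V k).comp (U k) = ContinuousLinearMap.id ℝ H)
    (hUV : ∀ k, (U k).comp (V k) = ContinuousLinearMap.id ℝ H)
    (hUnorm : ∀ k, ‖U k‖ ≤ μ)
    (η : ℕ → ℝ) (hη0 : ∀ k, 0 ≤ η k) (hηsum : Summable η)
    (hUmono : ∀ k, ∀ z : H, (1 + η k) * ⟪U (k + 1) z, z⟫ ≥ ⟪U k z, z⟫)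
    (γ lam αk : ℕ → ℝ)
    (hγ : ∀ k, 0 < γ k ∧ γ k < 2 * β / ‖U k‖)
    (hαk : ∀ k, αk k = 2 * β / (4 * β - γ k * ‖U k‖))
    (hlam : ∀ k, 0 < lam k ∧ lam k < 1 / αk k)
    (a b : ℕ → H)
    (ha : Summable (fun k => lam k * ‖a k‖))
    (hb : Summable (fun k => lam k * ‖b k‖))
    (J : ℕ → H → H)
    (hJ : ∀ k, ∀ y : H, (1 / γ k) • (V k (y - J k y)) ∈ A (J k y))
    (x : ℕ → H)
    (hx : ∀ k, x (k + 1) =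
      x k + lam k • (J k (x k - γ k • U k (B (x k) + b k)) + a k - x k))
    (lamlb τ : ℝ) (hlamlb : 0 < lamlb) (hτ : 0 < τ)
    (hlam' : ∀ k, lamlb ≤ lam k ∧ lam k ≤ 1 / αk k - τ)
    (γlb : ℝ) (hγlb : 0 < γlb) (hγ' : ∀ k, γlb ≤ γ k) :
    ∃ p ∈ {z : H | ∃ u ∈ A z, u + B z = 0},
      ∀ y : H, Tendsto (fun k => ⟪x k, y⟫) atTop (nhds ⟪p, y⟫) := by
  have hUs : ∀ k x y, ⟪U k x, y⟫ = ⟪x, U k y⟫ := fun k => (hU k).isSymmetric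
  have hUV' : ∀ k x, U k (V k x) = x := fun k x => by
    simpa using congrArg (fun T : H →L[ℝ] H => T x) (hUV k)
  have hVU' : ∀ k x, V k (U k x) = x := fun k x => by
    simpa using congrArg (fun T : H →L[ℝ] H => T x) (hVU k)
  have hinv := fun k => fb_inv (U k) (V k) (hUs k) α hα (hUpos k) (hUV' k)
  have hVp : ∀ k x, 0 ≤ ⟪V k x, x⟫ := fun k => (hinv k).1
  have hVn : ∀ k x, ‖V k x‖ ≤ ‖x‖ / α := fun k => (hinv k).2.1
  have hVu : ∀ k x, ⟪V k x, x⟫ ≤ ‖x‖ ^ 2 / α := fun k => (hinv k).2.2.1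
  have hVl : ∀ k x, ‖x‖ ^ 2 ≤ ‖U k‖ * ⟪V k x, x⟫ := fun k => (hinv k).2.2.2.1
  have hVs : ∀ k x y, ⟪V k x, y⟫ = ⟪x, V k y⟫ := fun k => (hinv k).2.2.2.2
  have hVl' : ∀ k x, ‖x‖ ^ 2 ≤ μ * ⟪V k x, x⟫ := fun k x =>
    (hVl k x).trans (mul_le_mul_of_nonneg_right (hUnorm k) (hVp k x))
  have hVm : ∀ k x, ⟪V (k + 1) x, x⟫ ≤ (1 + η k) * ⟪V k x, x⟫ := fun k =>
    fb_antitone (U k) (V k) (U (k + 1)) (V (k + 1)) (hUs k)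
      (fun x => le_trans (by positivity) (hUpos k x)) (hUV' k) (hUV' (k + 1)) (hVp k)
      (hVp (k + 1)) _ (by linarith [hη0 k]) (hUmono k)
  have hγU : ∀ k, γ k * ‖U k‖ < 2 * β := fun k => by
    have h := hγ k
    have hpos : 0 < ‖U k‖ := by
      rcases (norm_nonneg (U k)).eq_or_lt with h0 | h0
      · rw [← h0] at h; simp at h; linarith
      · exact h0
    exact (lt_div_iff₀ hpos).1 h.2
  have hlτ : ∀ k, τ ≤ 2 - γ k * ‖U k‖ / (2 * β) - lam k := fun k => by
    have h1 := (hlam' k).2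
    have h2 : 1 / αk k = 2 - γ k * ‖U k‖ / (2 * β) := by
      rw [hαk, one_div_div]; field_simp; ring
    rw [h2] at h1; linarith
  have hBl : ∀ x y, ‖B x - B y‖ ≤ ‖x - y‖ / β := fun x y => by
    rw [le_div_iff₀ hβ]
    have h1 := hB x y
    have h2 := real_inner_le_norm (x - y) (B x - B y)
    rcases (norm_nonneg (B x - B y)).eq_or_lt with h | h
    · rw [← h]; simp
    · have : ‖B x - B y‖ * (‖B x - B y‖ * β) ≤ ‖B x - B y‖ * ‖x - y‖ := by nlinarith
      exact le_of_mul_le_mul_left this h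
  set z : ℕ → H := fun k => J k (x k - γ k • U k (B (x k))) with hz
  have hzA : ∀ k, (1 / γ k) • V k (x k - z k) - B (x k) ∈ A (z k) := fun k => by
    have := hJ k (x k - γ k • U k (B (x k)))
    convert this using 1
    simp only [hz, map_sub, map_smul, hVU', smul_sub, smul_smul]
    rw [one_div, inv_mul_cancel₀ (hγ k).1.ne', one_smul]
    abel
  set c := √(1 / α) with hc
  have hNu : ∀ k y, fbN (V k) y ≤ c * ‖y‖ := fun k y => by
    rw [hc, ← Real.sqrt_sq (norm_nonneg y), ← Real.sqrt_mul (by positivity)]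
    apply Real.sqrt_le_sqrt
    have := hVu k y
    calc _ ≤ _ := this
      _ = _ := by ring
  set e : ℕ → H := fun k => J k (x k - γ k • U k (B (x k) + b k)) + a k - z k with he
  have heb : ∀ k, fbN (V k) (e k) ≤ c * (2 * β * ‖b k‖ + ‖a k‖) := fun k => by
    set y := x k - γ k • U k (B (x k) + b k) with hy
    have h1 : e k = (J k y - z k) + a k := by simp only [he, ← hy]; abel
    rw [h1]
    have h2 := fbN_add (V k) (hVs k) (hVp k) (J k y - z k) (a k)
    have h3 := fb_nonexp (V k) (hVs k) (hVp k) (γ k) (hγ k).1 y (x k - γ k • U k (B (x k)))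
      (J k y) (z k) (hAmono _ _ _ _ (hJ k y) (hJ k _))
    have h4 := hNu k (y - (x k - γ k • U k (B (x k))))
    have h5 := hNu k (a k)
    have h6 : y - (x k - γ k • U k (B (x k))) = -(γ k • U k (b k)) := by
      rw [hy]; simp only [map_add, smul_add]; abel
    have h7 : ‖y - (x k - γ k • U k (B (x k)))‖ ≤ 2 * β * ‖b k‖ := by
      rw [h6, norm_neg, norm_smul, Real.norm_of_nonneg (hγ k).1.le]
      have h8 := (U k).le_opNorm (b k)
      have h9 := mul_le_mul_of_nonneg_left h8 (hγ k).1.le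
      have h10 := mul_le_mul_of_nonneg_right (hγU k).le (norm_nonneg (b k))
      linarith
    have h8 := mul_le_mul_of_nonneg_left h7 (Real.sqrt_nonneg (1 / α))
    rw [← hc] at h8
    linarith
  set ε : ℕ → ℝ := fun k => lam k * fbN (V k) (e k) with hε
  have hε0 : ∀ k, 0 ≤ ε k := fun k => mul_nonneg (hlam k).1.le (fbN_nonneg _ _)
  have hεs : Summable ε := by
    refine Summable.of_nonneg_of_le hε0 (fun k => ?_) ((hb.mul_left (c * (2 * β))).add (ha.mul_left c))
    have := mul_le_mul_of_nonneg_left (heb k) (hlam k).1.le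
    calc _ ≤ _ := this
      _ = _ := by ring
  have hxs : ∀ k, x (k + 1) = (x k + lam k • (z k - x k)) + lam k • e k := fun k => by
    have h1 : (z k - x k) + e k = J k (x k - γ k • U k (B (x k) + b k)) + a k - x k := by
      simp only [he]; generalize J k (x k - γ k • U k (B (x k) + b k)) = t; abel
    rw [hx k, add_assoc, ← smul_add, h1]
  have key : ∀ p, -B p ∈ A p → (∃ l, Tendsto (fun k => fbN (V k) (x k - p)) atTop (nhds l)) ∧
      Tendsto (fun k => z k - x k) atTop (nhds 0) := by
    intro p hp
    set r : ℕ → ℝ := fun k => fbN (V k) (x k - p) with hr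
    set q : ℕ → ℝ := fun k => fbN (V k) (x k + lam k • (z k - x k) - p) with hq
    have hr0 : ∀ k, 0 ≤ r k := fun k => fbN_nonneg _ _
    have hq0 : ∀ k, 0 ≤ q k := fun k => fbN_nonneg _ _
    have hstep : ∀ k, q k ^ 2 ≤ r k ^ 2 - lamlb * τ * ⟪V k (z k - x k), z k - x k⟫ := fun k => by
      simp only [hq, hr]
      rw [fbN_sq _ (hVp k), fbN_sq _ (hVp k)]
      refine (fb_step (U k) (V k) (hVs k) (hVl k) β (γ k) hβ (hγ k).1 (lam k) (hlam k).1
        (x k) (z k) p _ _ (hB _ _) (hAmono _ _ _ _ (hzA k) hp)).trans ?_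
      have h1 : lamlb * τ ≤ lam k * (2 - γ k * ‖U k‖ / (2 * β) - lam k) :=
        mul_le_mul (hlam' k).1 (hlτ k) hτ.le (hlam k).1.le
      have := mul_le_mul_of_nonneg_right h1 (hVp k (z k - x k))
      linarith
    have hqr : ∀ k, q k ≤ r k := fun k => by
      apply le_of_sq_le_sq _ (hr0 k)
      have h1 := hstep k
      have h2 := mul_nonneg (mul_pos hlamlb hτ).le (hVp k (z k - x k))
      linarith
    have hrq : ∀ k, r (k + 1) ≤ (1 + η k) * (q k + ε k) := fun k => by
      have h0 := hη0 k
      have h1 : r (k + 1) ≤ (1 + η k) * fbN (V k) (x (k + 1) - p) := by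
        apply le_of_sq_le_sq _ (mul_nonneg (by linarith) (fbN_nonneg _ _))
        rw [mul_pow, fbN_sq _ (hVp k)]
        simp only [hr]
        rw [fbN_sq _ (hVp (k + 1))]
        refine (hVm k _).trans ?_
        exact mul_le_mul_of_nonneg_right (by nlinarith) (hVp k _)
      refine h1.trans (mul_le_mul_of_nonneg_left ?_ (by linarith))
      have h2 : x (k + 1) - p = (x k + lam k • (z k - x k) - p) + lam k • e k := by
        rw [hxs]; abel
      rw [h2]
      refine (fbN_add (V k) (hVs k) (hVp k) _ _).trans (le_of_eq ?_)
      rw [fbN_smul _ _ (hlam k).1.le]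
    have hrr : ∀ k, r (k + 1) ≤ (1 + η k) * (r k + ε k) := fun k =>
      (hrq k).trans (mul_le_mul_of_nonneg_left (by linarith [hqr k]) (by linarith [hη0 k]))
    obtain ⟨l, hl⟩ := fb_rs η ε r hη0 hηsum hε0 hεs hr0 hrr
    refine ⟨⟨l, hl⟩, ?_⟩
    have hql : Tendsto q atTop (nhds l) := by
      have h1 : Tendsto (fun k => r (k + 1) / (1 + η k) - ε k) atTop (nhds (l / (1 + 0) - 0)) :=
        (((tendsto_add_atTop_iff_nat 1).2 hl).div (hηsum.tendsto_atTop_zero.const_add 1)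
          (by norm_num)).sub hεs.tendsto_atTop_zero
      simp only [add_zero, div_one, sub_zero] at h1
      refine tendsto_of_tendsto_of_tendsto_of_le_of_le h1 hl (fun k => ?_) hqr
      have h2 : r (k + 1) / (1 + η k) ≤ q k + ε k := by
        rw [div_le_iff₀ (by linarith [hη0 k]), mul_comm]; exact hrq k
      show r (k + 1) / (1 + η k) - ε k ≤ q k
      linarith
    have hd : Tendsto (fun k => √(μ / (lamlb * τ) * (r k ^ 2 - q k ^ 2))) atTop (nhds 0) := by
      have := (((hl.pow 2).sub (hql.pow 2)).const_mul (μ / (lamlb * τ))).sqrt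
      simpa using this
    refine squeeze_zero_norm (fun k => ?_) hd
    apply Real.le_sqrt_of_sq_le
    have h1 := hstep k
    have h2 := hVl' k (z k - x k)
    have hpos : 0 < lamlb * τ := mul_pos hlamlb hτ
    rw [div_mul_eq_mul_div, le_div_iff₀ hpos]
    have h3 := mul_le_mul_of_nonneg_right h2 hpos.le
    have h4 : μ * (lamlb * τ * ⟪V k (z k - x k), z k - x k⟫) ≤ μ * (r k ^ 2 - q k ^ 2) := by
      apply mul_le_mul_of_nonneg_left _ hμ.le
      linarith
    linarith
  obtain ⟨p0, u0, hu0, hu0'⟩ := hΩ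
  have hp0 : -B p0 ∈ A p0 := by rwa [← eq_neg_of_add_eq_zero_left hu0']
  obtain ⟨⟨l0, hl0⟩, hzx⟩ := key p0 hp0
  have hxb : ∃ M, ∀ k, ‖x k‖ ≤ M := by
    obtain ⟨R, hR⟩ := hl0.bddAbove_range
    refine ⟨√μ * R + ‖p0‖, fun k => ?_⟩
    have h1 : fbN (V k) (x k - p0) ≤ R := hR ⟨k, rfl⟩
    have h2 : ‖x k - p0‖ ≤ √μ * fbN (V k) (x k - p0) := by
      unfold fbN
      rw [← Real.sqrt_mul hμ.le]
      exact Real.le_sqrt_of_sq_le (hVl' k _)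
    have h3 := mul_le_mul_of_nonneg_left h1 (Real.sqrt_nonneg μ)
    have h4 := norm_sub_norm_le (x k) p0
    linarith
  obtain ⟨M, hM⟩ := hxb
  have hzb : ∃ M', ∀ k, ‖z k‖ ≤ M' := by
    obtain ⟨R, hR⟩ := hzx.norm.bddAbove_range
    refine ⟨R + M, fun k => ?_⟩
    have h1 : ‖z k - x k‖ ≤ R := hR ⟨k, rfl⟩
    have h4 := norm_sub_norm_le (z k) (x k)
    linarith [hM k]
  obtain ⟨M', hM'⟩ := hzb
  set w : ℕ → H := fun k => (1 / γ k) • V k (x k - z k) - B (x k) + B (z k) with hw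
  have hw0 : Tendsto w atTop (nhds 0) := by
    have h0 : Tendsto (fun k => (1 / γlb / α + 1 / β) * ‖z k - x k‖) atTop (nhds 0) := by
      simpa using hzx.norm.const_mul (1 / γlb / α + 1 / β)
    refine squeeze_zero_norm (fun k => ?_) h0
    have e1 : w k = (1 / γ k) • V k (x k - z k) + (B (z k) - B (x k)) := by
      simp only [hw]; abel
    rw [e1]
    refine (norm_add_le _ _).trans ?_
    have h1 := hBl (z k) (x k)
    have h2 := hVn k (x k - z k)
    rw [norm_smul, Real.norm_of_nonneg (by have := (hγ k).1; positivity)]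
    have h3 : 1 / γ k ≤ 1 / γlb := one_div_le_one_div_of_le hγlb (hγ' k)
    have h4 := mul_le_mul h3 h2 (norm_nonneg _) (by positivity)
    rw [norm_sub_rev (x k)] at h4
    calc _ ≤ 1 / γlb * (‖z k - x k‖ / α) + ‖z k - x k‖ / β := add_le_add h4 h1
      _ = _ := by ring
  have hclus : ∀ (F : Ultrafilter ℕ), (F : Filter ℕ) ≤ atTop → ∀ p,
      (∀ y, Tendsto (fun k => ⟪x k, y⟫) F (nhds ⟪p, y⟫)) → -B p ∈ A p := by
    intro F hF p hp
    refine fb_demi F A hAmono β hβ B hB (U 0) (V 0) (hVl 0) (γ 0) (hγ 0).1 (hγU 0) (hVU' 0)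
      (J 0) (hJ 0) z w p M' hM' (fun y => ?_) (hw0.mono_left hF) (fun k => ?_)
    · have h1 : Tendsto (fun k => ⟪z k - x k, y⟫) F (nhds ⟪(0 : H), y⟫) :=
        Tendsto.inner (hzx.mono_left hF) tendsto_const_nhds
      have := h1.add (hp y)
      simpa [inner_sub_left] using this
    · simpa [hw] using hzA k
  have hstr := fb_strong η hη0 hηsum V hVs hVp (1 / α)
    (fun k x => (hVu k x).trans (le_of_eq (by ring))) (by positivity) hVm
  have huniq : ∀ (F G : Ultrafilter ℕ), (F : Filter ℕ) ≤ atTop → (G : Filter ℕ) ≤ atTop → ∀ p q,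
      (∀ y, Tendsto (fun k => ⟪x k, y⟫) F (nhds ⟪p, y⟫)) →
      (∀ y, Tendsto (fun k => ⟪x k, y⟫) G (nhds ⟪q, y⟫)) → p = q := by
    intro F G hF hG p q hp hq
    obtain ⟨⟨l1, h1⟩, -⟩ := key p (hclus F hF p hp)
    obtain ⟨⟨l2, h2⟩, -⟩ := key q (hclus G hG q hq)
    obtain ⟨v, hv⟩ := hstr (p - q)
    obtain ⟨v1, hv1⟩ := hstr p
    obtain ⟨v2, hv2⟩ := hstr q
    have hcv : Tendsto (fun k => ⟪x k, V k (p - q)⟫) atTop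
        (nhds ((l2 ^ 2 - l1 ^ 2 + ⟪v1, p⟫ - ⟪v2, q⟫) / 2)) := by
      have := ((((h2.pow 2).sub (h1.pow 2)).add (hv1.inner (tendsto_const_nhds (x := p)))).sub
        (hv2.inner (tendsto_const_nhds (x := q)))).div_const 2
      refine this.congr fun k => ?_
      rw [fbN_sq _ (hVp k), fbN_sq _ (hVp k)]
      have e1 : ⟪V k p, x k⟫ = ⟪x k, V k p⟫ := real_inner_comm _ _
      have e2 : ⟪V k q, x k⟫ = ⟪x k, V k q⟫ := real_inner_comm _ _
      have e3 : ⟪V k (x k), p⟫ = ⟪x k, V k p⟫ := hVs k _ _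
      have e4 : ⟪V k (x k), q⟫ = ⟪x k, V k q⟫ := hVs k _ _
      simp only [map_sub, inner_sub_left, inner_sub_right, e1, e2, e3, e4]
      ring
    have hA1 := tendsto_nhds_unique (hcv.mono_left hF) (fb_ws F x _ p v M hM hp (hv.mono_left hF))
    have hA2 := tendsto_nhds_unique (hcv.mono_left hG) (fb_ws G x _ q v M hM hq (hv.mono_left hG))
    have hpv : ⟪v, p - q⟫ = 0 := by
      rw [real_inner_comm, inner_sub_left]; linarith
    have h3 : Tendsto (fun k => μ * ⟪V k (p - q), p - q⟫) atTop (nhds (μ * ⟪v, p - q⟫)) :=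
      (hv.inner tendsto_const_nhds).const_mul μ
    have h4 := ge_of_tendsto' h3 (fun k => hVl' k (p - q))
    rw [hpv, mul_zero] at h4
    have h5 : ‖p - q‖ = 0 := pow_eq_zero_iff two_ne_zero |>.1 (le_antisymm h4 (by positivity))
    exact sub_eq_zero.1 (norm_eq_zero.1 h5)
  have hF0 : ((Ultrafilter.of atTop : Ultrafilter ℕ) : Filter ℕ) ≤ atTop := Ultrafilter.of_le _
  obtain ⟨p, hp⟩ := fb_weak (Ultrafilter.of atTop) x M hM
  refine ⟨p, ⟨-B p, hclus _ hF0 p hp, by simp⟩, fun y => ?_⟩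
  rw [tendsto_iff_ultrafilter]
  intro G hG
  obtain ⟨q, hq⟩ := fb_weak G x M hM
  rw [huniq _ G hF0 hG p q hp hq]
  exact hq y
end

section
/- Under the hypotheses listed in the context, suppose in addition there exist λ̲ > 0 with λ̲ ≤ λ_k ≤ 1 for all k, γ̲ > 0 with γ_k ≥ γ̲ for all k, and ε ∈ (0, 2β − μγ̲) with γ_k ≤ (2β − ε)/μ for all k. Then for every x* ∈ Ω, the series ∑_k ‖B x_k − B x*‖² converges (is finite). -/
open RealInnerProductSpace Filter

lemma summable_mul_aux {f g : ℕ → ℝ} (hf : ∀ k, 0 ≤ f k) (hg : ∀ k, 0 ≤ g k)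
    (sf : Summable f) (sg : Summable g) : Summable (fun k => f k * g k) := by
  refine Summable.of_nonneg_of_le (fun k => mul_nonneg (hf k) (hg k)) (fun k => ?_)
    (sf.mul_right (∑' i, g i))
  exact mul_le_mul_of_nonneg_left (sg.le_tsum k (fun j _ => hg j)) (hf k)

lemma seq_aux {Q d e f : ℕ → ℝ} {δ : ℝ} (hδ : 0 < δ) (hQ : ∀ k, 0 ≤ Q k) (hd : ∀ k, 0 ≤ d k)
    (he : ∀ k, 0 ≤ e k) (hf : ∀ k, 0 ≤ f k) (se : Summable e) (sf : Summable f)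
    (h : ∀ k, Q (k + 1) ≤ (1 + e k) * Q k + f k - δ * d k) : Summable d := by
  have b1 : ∀ k, Q k ≤ Real.exp (∑ i ∈ Finset.range k, e i) *
      (Q 0 + ∑ i ∈ Finset.range k, f i) := by
    intro k
    induction k with
    | zero => simp
    | succ k ih =>
      rw [Finset.sum_range_succ, Finset.sum_range_succ, Real.exp_add]
      have h1 := h k
      have h2 : 0 ≤ δ * d k := mul_nonneg hδ.le (hd k)
      have h3 : 1 + e k ≤ Real.exp (e k) := by linarith [Real.add_one_le_exp (e k)]
      have h4 : (1 + e k) * Q k ≤ Real.exp (e k) * (Real.exp (∑ i ∈ Finset.range k, e i) *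
        (Q 0 + ∑ i ∈ Finset.range k, f i)) :=
        mul_le_mul h3 ih (hQ k) (Real.exp_pos _).le
      have h5 : (1:ℝ) ≤ Real.exp (∑ i ∈ Finset.range k, e i) * Real.exp (e k) := by
        rw [← Real.exp_add]
        exact Real.one_le_exp (add_nonneg (Finset.sum_nonneg fun i _ => he i) (he k))
      have h6 := mul_le_mul_of_nonneg_right h5 (hf k)
      linarith
  obtain ⟨C, hC⟩ : ∃ C, ∀ k, Q k ≤ C := by
    refine ⟨Real.exp (∑' i, e i) * (Q 0 + ∑' i, f i), fun k => (b1 k).trans ?_⟩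
    have s1 := se.sum_le_tsum (Finset.range k) (fun i _ => he i)
    have s2 := sf.sum_le_tsum (Finset.range k) (fun i _ => hf i)
    refine mul_le_mul (Real.exp_le_exp.2 s1) (by linarith) ?_ (Real.exp_pos _).le
    exact add_nonneg (hQ 0) (Finset.sum_nonneg fun i _ => hf i)
  have b2 : ∀ k, δ * ∑ i ∈ Finset.range k, d i ≤
      Q 0 - Q k + ∑ i ∈ Finset.range k, (e i * C + f i) := by
    intro k
    induction k with
    | zero => simp
    | succ k ih =>
      rw [Finset.sum_range_succ, Finset.sum_range_succ]
      have h1 := h k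
      have h2 := mul_le_mul_of_nonneg_left (hC k) (he k)
      linarith
  have sg : Summable (fun i => e i * C + f i) := (se.mul_right C).add sf
  have hC0 : 0 ≤ C := (hQ 0).trans (hC 0)
  refine summable_of_sum_range_le (c := (Q 0 + ∑' i, (e i * C + f i)) / δ) hd fun k => ?_
  rw [le_div_iff₀ hδ]
  have s1 := sg.sum_le_tsum (Finset.range k)
    (fun i _ => add_nonneg (mul_nonneg (he i) hC0) (hf i))
  linarith [b2 k, hQ k]

section
variable {H : Type*} [NormedAddCommGroup H] [InnerProductSpace ℝ H]

lemma metric_aux {U V : H →L[ℝ] H} {α μ : ℝ} (hα : 0 < α) (hμ : 0 < μ)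
    (hUs : ∀ x y : H, ⟪U x, y⟫ = ⟪x, U y⟫)
    (hUpos : ∀ x : H, ⟪U x, x⟫ ≥ α * ‖x‖ ^ 2)
    (hUV : ∀ x, U (V x) = x) (hUn : ‖U‖ ≤ μ) (z : H) :
    0 ≤ ⟪V z, z⟫ ∧ ‖z‖ ^ 2 ≤ μ * ⟪V z, z⟫ ∧ α * ‖V z‖ ^ 2 ≤ ⟪V z, z⟫ ∧
      α * ⟪V z, z⟫ ≤ ‖z‖ ^ 2 ∧ ⟪U z, z⟫ ≤ μ * ‖z‖ ^ 2 := by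
  have h1 : α * ‖V z‖ ^ 2 ≤ ⟪V z, z⟫ := by
    have := hUpos (V z)
    rw [hUV, real_inner_comm] at this
    exact this
  have h5 : ⟪U z, z⟫ ≤ μ * ‖z‖ ^ 2 := by
    have a1 := real_inner_le_norm (U z) z
    have a2 := U.le_of_opNorm_le hUn z
    nlinarith [norm_nonneg z]
  have h0 : 0 ≤ ⟪V z, z⟫ := le_trans (by positivity) h1
  refine ⟨h0, ?_, h1, ?_, h5⟩
  · have a1 := hUpos (μ • V z - z)
    have a2 : 0 ≤ ⟪U (μ • V z - z), μ • V z - z⟫ := le_trans (by positivity) a1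
    have a3 : ⟪U (μ • V z - z), μ • V z - z⟫ = μ ^ 2 * ⟪V z, z⟫ - 2 * μ * ‖z‖ ^ 2 + ⟪U z, z⟫ := by
      rw [map_sub, map_smul, hUV]
      simp only [inner_sub_left, inner_sub_right, real_inner_smul_left, real_inner_smul_right]
      rw [hUs z (V z), hUV, real_inner_self_eq_norm_sq, real_inner_comm z (V z)]
      ring
    rw [a3] at a2
    have : 0 ≤ μ * (μ * ⟪V z, z⟫ - ‖z‖ ^ 2) := by nlinarith
    nlinarith [nonneg_of_mul_nonneg_right this hμ]
  · have a1 := real_inner_le_norm (V z) z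
    have a2 := sq_nonneg (α * ‖V z‖ - ‖z‖)
    have a3 : α * ⟪V z, z⟫ ≤ α * (‖V z‖ * ‖z‖) := mul_le_mul_of_nonneg_left a1 hα.le
    have a4 := mul_le_mul_of_nonneg_left h1 hα.le
    nlinarith

lemma change_aux {U V U' V' : H →L[ℝ] H} {c : ℝ} (hc : 0 < c)
    (hUs : ∀ x y : H, ⟪U x, y⟫ = ⟪x, U y⟫)
    (hUpos : ∀ x : H, 0 ≤ ⟪U x, x⟫)
    (hUV : ∀ x, U (V x) = x) (hUV' : ∀ x, U' (V' x) = x)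
    (hm : ∀ z, c * ⟪U' z, z⟫ ≥ ⟪U z, z⟫) (z : H) :
    ⟪V' z, z⟫ ≤ c * ⟪V z, z⟫ := by
  have a1 := hUpos (V' z - c • V z)
  have a2 := hm (V' z)
  rw [hUV'] at a2
  have a3 : ⟪U (V' z - c • V z), V' z - c • V z⟫ =
      ⟪U (V' z), V' z⟫ - 2 * c * ⟪V' z, z⟫ + c ^ 2 * ⟪V z, z⟫ := by
    rw [map_sub, map_smul, hUV]
    simp only [inner_sub_left, inner_sub_right, real_inner_smul_left, real_inner_smul_right]
    rw [hUs (V' z) (V z), hUV, real_inner_comm (V' z) z, real_inner_comm (V z) z]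
    ring
  rw [a3] at a1
  rw [real_inner_comm] at a2
  have : 0 ≤ c * (c * ⟪V z, z⟫ - ⟪V' z, z⟫) := by nlinarith
  linarith [nonneg_of_mul_nonneg_right this hc]

/-- The forward-backward step. -/
lemma step_aux {U V : H →L[ℝ] H} {α μ β γ G ε : ℝ} (hα : 0 < α) (hμ : 0 < μ)
    (hUs : ∀ x y : H, ⟪U x, y⟫ = ⟪x, U y⟫)
    (hVs : ∀ x y : H, ⟪V x, y⟫ = ⟪x, V y⟫)
    (hUpos : ∀ x : H, ⟪U x, x⟫ ≥ α * ‖x‖ ^ 2)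
    (hUV : ∀ x, U (V x) = x) (hVU : ∀ x, V (U x) = x) (hUn : ‖U‖ ≤ μ)
    (hγ : 0 < γ) (hG : γ ≤ G) (hε : γ * μ ≤ 2 * β - ε) 
    (X P D b : H) (hXD : ⟪X, D⟫ ≥ β * ‖D‖ ^ 2)
    (hP : 0 ≤ ⟪P, V (X - P) - γ • D - γ • b⟫) (hε0 : 0 < ε) :
    ⟪V P, P⟫ ≤ (1 + 2 * μ * G * ‖b‖) * ⟪V X, X⟫
      + (G * ‖b‖ + 4 * G ^ 3 * μ ^ 2 * (‖b‖ * (‖b‖ * ‖b‖))) - γ * ε * ‖D‖ ^ 2 := by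
  obtain ⟨q0, q1, -, -, -⟩ := metric_aux hα hμ hUs hUpos hUV hUn P
  obtain ⟨r0, -, -, -, -⟩ := metric_aux hα hμ hUs hUpos hUV hUn X
  obtain ⟨-, -, -, -, u5⟩ := metric_aux hα hμ hUs hUpos hUV hUn D
  obtain ⟨w0, -, -, -, -⟩ := metric_aux hα hμ hUs hUpos hUV hUn (X - P - γ • U D)
  have e1 : ⟪V (X - P - γ • U D), X - P - γ • U D⟫ =
      ⟪V (X - P), X - P⟫ - 2 * γ * ⟪X - P, D⟫ + γ ^ 2 * ⟪U D, D⟫ := by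
    generalize X - P = Y
    simp only [map_sub, map_smul, hVU, inner_sub_left, inner_sub_right, real_inner_smul_left,
      real_inner_smul_right]
    rw [hVs Y (U D), hVU, real_inner_comm Y D, real_inner_comm (U D) D]
    ring
  have e2 : 2 * ⟪P, V (X - P) - γ • D - γ • b⟫ = ⟪V X, X⟫ - ⟪V P, P⟫ - ⟪V (X - P), X - P⟫
      - 2 * γ * ⟪X, D⟫ + 2 * γ * ⟪X - P, D⟫ - 2 * γ * ⟪P, b⟫ := by
    simp only [map_sub, inner_sub_left, inner_sub_right, real_inner_smul_right]
    rw [hVs X P, hVs P X, ← hVs X P, real_inner_comm (V X) P, hVs P P]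
    ring
  have hb : -⟪P, b⟫ ≤ ‖P‖ * ‖b‖ := by
    have := abs_real_inner_le_norm P b
    have := neg_abs_le ⟪P, b⟫
    linarith
  have k1 : ⟪V P, P⟫ ≤ ⟪V X, X⟫ - γ * ε * ‖D‖ ^ 2 + 2 * γ * (‖P‖ * ‖b‖) := by
    have m1 := mul_le_mul_of_nonneg_left hXD hγ.le
    have m2 := mul_le_mul_of_nonneg_left u5 (sq_nonneg γ)
    have m3 := mul_le_mul_of_nonneg_left hb hγ.le
    have m4 := mul_le_mul_of_nonneg_right hε (mul_nonneg hγ.le (sq_nonneg ‖D‖))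
    nlinarith
  have nD : 0 ≤ γ * ε * ‖D‖ ^ 2 := by positivity
  have nb := norm_nonneg b
  have nP := norm_nonneg P
  have hG0 : 0 < G := hγ.trans_le hG
  have k1' : ⟪V P, P⟫ ≤ ⟪V X, X⟫ - γ * ε * ‖D‖ ^ 2 + 2 * G * (‖P‖ * ‖b‖) := by
    have := mul_le_mul_of_nonneg_right hG (mul_nonneg nP nb)
    linarith
  have k2 : ⟪V P, P⟫ ≤ 2 * ⟪V X, X⟫ + 4 * G ^ 2 * μ * ‖b‖ ^ 2 := by
    have m : 2 * G * (‖P‖ * ‖b‖) ≤ ⟪V P, P⟫ / 2 + 2 * G ^ 2 * μ * ‖b‖ ^ 2 := by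
      have := sq_nonneg (‖P‖ - 2 * G * μ * ‖b‖)
      have h : 0 ≤ μ * (⟪V P, P⟫ / 2 + 2 * G ^ 2 * μ * ‖b‖ ^ 2 - 2 * G * (‖P‖ * ‖b‖)) := by
        nlinarith
      linarith [nonneg_of_mul_nonneg_right h hμ]
    linarith
  have k3 : 2 * ‖P‖ ≤ 1 + μ * (2 * ⟪V X, X⟫ + 4 * G ^ 2 * μ * ‖b‖ ^ 2) := by
    have := mul_le_mul_of_nonneg_left k2 hμ.le
    nlinarith [sq_nonneg (‖P‖ - 1)]
  have k4 := mul_le_mul_of_nonneg_left k3 (mul_nonneg hG0.le nb)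
  nlinarith

/-- Relaxation and error in the resolvent. -/
lemma relax_aux {U V : H →L[ℝ] H} {α μ l : ℝ} (hα : 0 < α) (hμ : 0 < μ)
    (hUs : ∀ x y : H, ⟪U x, y⟫ = ⟪x, U y⟫)
    (hVs : ∀ x y : H, ⟪V x, y⟫ = ⟪x, V y⟫)
    (hUpos : ∀ x : H, ⟪U x, x⟫ ≥ α * ‖x‖ ^ 2)
    (hUV : ∀ x, U (V x) = x) (hUn : ‖U‖ ≤ μ)
    (hl : 0 < l) (hl1 : l ≤ 1) (X P a : H) :
    ⟪V (X + l • (P + a - X)), X + l • (P + a - X)⟫ ≤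
      (1 + α⁻¹ * ‖a‖) * ((1 - l) * ⟪V X, X⟫ + l * ⟪V P, P⟫) + (‖a‖ + α⁻¹ * (‖a‖ * ‖a‖)) := by
  obtain ⟨x0, -, -, -, -⟩ := metric_aux hα hμ hUs hUpos hUV hUn (X - P)
  obtain ⟨-, -, -, a4, -⟩ := metric_aux hα hμ hUs hUpos hUV hUn a
  set W : H := (1 - l) • X + l • P with hW
  obtain ⟨w0, -, w3, -, -⟩ := metric_aux hα hμ hUs hUpos hUV hUn W
  have eW : X + l • (P + a - X) = W + l • a := by
    rw [hW]; module
  have cW : ⟪V W, W⟫ = (1 - l) * ⟪V X, X⟫ + l * ⟪V P, P⟫ - l * (1 - l) * ⟪V (X - P), X - P⟫ := by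
    rw [hW]
    simp only [map_sub, map_add, map_smul, inner_sub_left, inner_sub_right, inner_add_left,
      inner_add_right, real_inner_smul_left, real_inner_smul_right]
    ring
  have cW' : ⟪V W, W⟫ ≤ (1 - l) * ⟪V X, X⟫ + l * ⟪V P, P⟫ := by
    have := mul_nonneg (mul_nonneg hl.le (sub_nonneg.2 hl1)) x0
    linarith
  have e : ⟪V (W + l • a), W + l • a⟫ = ⟪V W, W⟫ + 2 * l * ⟪V W, a⟫ + l ^ 2 * ⟪V a, a⟫ := by
    simp only [map_add, map_smul, inner_add_left,
      inner_add_right, real_inner_smul_left, real_inner_smul_right]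
    rw [hVs a W, real_inner_comm (V W) a]
    ring
  rw [eW, e]
  have na := norm_nonneg a
  have i1 : ‖V W‖ ^ 2 ≤ α⁻¹ * ⟪V W, W⟫ := by
    rw [inv_mul_eq_div, le_div_iff₀ hα]; linarith
  have i2 : ⟪V a, a⟫ ≤ α⁻¹ * (‖a‖ * ‖a‖) := by
    rw [inv_mul_eq_div, le_div_iff₀ hα]; nlinarith
  have ia : 0 ≤ α⁻¹ * (‖a‖ * ‖a‖) := by positivity
  have i3 : l ^ 2 * ⟪V a, a⟫ ≤ α⁻¹ * (‖a‖ * ‖a‖) := by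
    have h1 : l ^ 2 ≤ 1 := by nlinarith
    have := mul_le_mul_of_nonneg_left i2 (sq_nonneg l)
    nlinarith
  have i4 : 2 * l * ⟪V W, a⟫ ≤ ‖a‖ * (1 + α⁻¹ * ⟪V W, W⟫) := by
    have h1 := real_inner_le_norm (V W) a
    have h2 := mul_le_mul_of_nonneg_left h1 hl.le
    have h3 := mul_le_mul_of_nonneg_right hl1 (mul_nonneg (norm_nonneg (V W)) na)
    have h4 : 2 * ‖V W‖ ≤ 1 + α⁻¹ * ⟪V W, W⟫ := by nlinarith [sq_nonneg (‖V W‖ - 1)]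
    have h5 := mul_le_mul_of_nonneg_left h4 na
    nlinarith
  have i5 : 0 ≤ 1 + α⁻¹ * ‖a‖ := by positivity
  have i6 := mul_le_mul_of_nonneg_left cW' i5
  nlinarith

end

theorem fb_B_square_summable
    {H : Type*} [NormedAddCommGroup H] [InnerProductSpace ℝ H] [CompleteSpace H]
    (β : ℝ) (hβ : 0 < β) (B : H → H)
    (hB : ∀ x y : H, ⟪x - y, B x - B y⟫ ≥ β * ‖B x - B y‖ ^ 2)
    (A : H → Set H)
    (hAmono : ∀ x y u v : H, u ∈ A x → v ∈ A y → ⟪x - y, u - v⟫ ≥ 0)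
    (hAmax : ∀ z w : H, (∀ x : H, ∀ u ∈ A x, ⟪x - z, u - w⟫ ≥ 0) → w ∈ A z)
    (hΩ : {z : H | ∃ u ∈ A z, u + B z = 0}.Nonempty)
    (α : ℝ) (hα : 0 < α) (μ : ℝ) (hμ : 0 < μ)
    (U V : ℕ → H →L[ℝ] H)
    (hU : ∀ k, IsSelfAdjoint (U k))
    (hUpos : ∀ k, ∀ x : H, ⟪U k x, x⟫ ≥ α * ‖x‖ ^ 2)
    (hV : ∀ k, IsSelfAdjoint (V k))
    (hVU : ∀ k, (V k).comp (U k) = ContinuousLinearMap.id ℝ H)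
    (hUV : ∀ k, (U k).comp (V k) = ContinuousLinearMap.id ℝ H)
    (hUnorm : ∀ k, ‖U k‖ ≤ μ)
    (η : ℕ → ℝ) (hη0 : ∀ k, 0 ≤ η k) (hηsum : Summable η)
    (hUmono : ∀ k, ∀ z : H, (1 + η k) * ⟪U (k + 1) z, z⟫ ≥ ⟪U k z, z⟫)
    (γ lam αk : ℕ → ℝ)
    (hγ : ∀ k, 0 < γ k ∧ γ k < 2 * β / ‖U k‖)
    (hαk : ∀ k, αk k = 2 * β / (4 * β - γ k * ‖U k‖))
    (hlam : ∀ k, 0 < lam k ∧ lam k < 1 / αk k)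
    (a b : ℕ → H)
    (ha : Summable (fun k => lam k * ‖a k‖))
    (hb : Summable (fun k => lam k * ‖b k‖))
    (J : ℕ → H → H)
    (hJ : ∀ k, ∀ y : H, (1 / γ k) • (V k (y - J k y)) ∈ A (J k y))
    (x : ℕ → H)
    (hx : ∀ k, x (k + 1) =
      x k + lam k • (J k (x k - γ k • U k (B (x k) + b k)) + a k - x k))
    (lamlb : ℝ) (hlamlb : 0 < lamlb)
    (hlam' : ∀ k, lamlb ≤ lam k ∧ lam k ≤ 1)
    (γlb : ℝ) (hγlb : 0 < γlb) (hγ' : ∀ k, γlb ≤ γ k)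
    (ε : ℝ) (hε : 0 < ε ∧ ε < 2 * β - μ * γlb)
    (hγub : ∀ k, γ k ≤ (2 * β - ε) / μ) :
    ∀ xs ∈ {z : H | ∃ u ∈ A z, u + B z = 0},
      Summable (fun k => ‖B (x k) - B xs‖ ^ 2) := by
  rintro xs ⟨u, hu, huB⟩
  have hUs : ∀ k, ∀ x y : H, ⟪U k x, y⟫ = ⟪x, U k y⟫ := fun k x y =>
    (ContinuousLinearMap.isSelfAdjoint_iff_isSymmetric.1 (hU k)) x y
  have hVs : ∀ k, ∀ x y : H, ⟪V k x, y⟫ = ⟪x, V k y⟫ := fun k x y =>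
    (ContinuousLinearMap.isSelfAdjoint_iff_isSymmetric.1 (hV k)) x y
  have hUV' : ∀ k, ∀ x, U k (V k x) = x := fun k x => DFunLike.congr_fun (hUV k) x
  have hVU' : ∀ k, ∀ x, V k (U k x) = x := fun k x => DFunLike.congr_fun (hVU k) x
  have sa : Summable (fun k => ‖a k‖) := by
    refine Summable.of_nonneg_of_le (fun k => norm_nonneg _) (fun k => ?_) (ha.mul_left lamlb⁻¹)
    rw [inv_mul_eq_div, le_div_iff₀ hlamlb]
    nlinarith [mul_le_mul_of_nonneg_right (hlam' k).1 (norm_nonneg (a k))]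
  have sb : Summable (fun k => ‖b k‖) := by
    refine Summable.of_nonneg_of_le (fun k => norm_nonneg _) (fun k => ?_) (hb.mul_left lamlb⁻¹)
    rw [inv_mul_eq_div, le_div_iff₀ hlamlb]
    nlinarith [mul_le_mul_of_nonneg_right (hlam' k).1 (norm_nonneg (b k))]
  have na : ∀ k, 0 ≤ ‖a k‖ := fun k => norm_nonneg _
  have nb : ∀ k, 0 ≤ ‖b k‖ := fun k => norm_nonneg _
  obtain ⟨G, hGdef⟩ : ∃ G, G = (2 * β - ε) / μ := ⟨_, rfl⟩
  have hG0 : 0 < G := by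
    have := hγub 0
    have := (hγ 0).1
    linarith
  have hγG : ∀ k, γ k ≤ G := fun k => hGdef ▸ hγub k
  let e1 : ℕ → ℝ := fun k => 2 * μ * G * ‖b k‖
  let f1 : ℕ → ℝ := fun k => G * ‖b k‖ + 4 * G ^ 3 * μ ^ 2 * (‖b k‖ * (‖b k‖ * ‖b k‖))
  let e2 : ℕ → ℝ := fun k => α⁻¹ * ‖a k‖
  let f2 : ℕ → ℝ := fun k => ‖a k‖ + α⁻¹ * (‖a k‖ * ‖a k‖)
  have ne1 : ∀ k, 0 ≤ e1 k := fun k => by positivity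
  have nf1 : ∀ k, 0 ≤ f1 k := fun k => by positivity
  have ne2 : ∀ k, 0 ≤ e2 k := fun k => by positivity
  have nf2 : ∀ k, 0 ≤ f2 k := fun k => by positivity
  have se1 : Summable e1 := sb.mul_left _
  have sbb := summable_mul_aux nb nb sb sb
  have sf1 : Summable f1 := (sb.mul_left _).add
    ((summable_mul_aux nb (fun k => mul_nonneg (nb k) (nb k)) sb sbb).mul_left _)
  have se2 : Summable e2 := sa.mul_left _
  have sf2 : Summable f2 := sa.add ((summable_mul_aux na na sa sa).mul_left _)
  -- combine the first two
  let e3 : ℕ → ℝ := fun k => e1 k + e2 k + e1 k * e2 k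
  let f3 : ℕ → ℝ := fun k => f1 k + f1 k * e2 k + f2 k
  have ne3 : ∀ k, 0 ≤ e3 k := fun k =>
    add_nonneg (add_nonneg (ne1 k) (ne2 k)) (mul_nonneg (ne1 k) (ne2 k))
  have nf3 : ∀ k, 0 ≤ f3 k := fun k =>
    add_nonneg (add_nonneg (nf1 k) (mul_nonneg (nf1 k) (ne2 k))) (nf2 k)
  have se3 : Summable e3 := (se1.add se2).add (summable_mul_aux ne1 ne2 se1 se2)
  have sf3 : Summable f3 := (sf1.add (summable_mul_aux nf1 ne2 sf1 se2)).add sf2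
  let e4 : ℕ → ℝ := fun k => e3 k + η k + e3 k * η k
  let f4 : ℕ → ℝ := fun k => f3 k + f3 k * η k
  have ne4 : ∀ k, 0 ≤ e4 k := fun k =>
    add_nonneg (add_nonneg (ne3 k) (hη0 k)) (mul_nonneg (ne3 k) (hη0 k))
  have nf4 : ∀ k, 0 ≤ f4 k := fun k => add_nonneg (nf3 k) (mul_nonneg (nf3 k) (hη0 k))
  have se4 : Summable e4 := (se3.add hηsum).add (summable_mul_aux ne3 hη0 se3 hηsum)
  have sf4 : Summable f4 := sf3.add (summable_mul_aux nf3 hη0 sf3 hηsum)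
  have hδ : 0 < lamlb * (γlb * ε) := mul_pos hlamlb (mul_pos hγlb hε.1)
  have nQ : ∀ k, 0 ≤ ⟪V k (x k - xs), x k - xs⟫ := fun k =>
    (metric_aux hα hμ (hUs k) (hUpos k) (hUV' k) (hUnorm k) _).1
  refine seq_aux (Q := fun k => ⟪V k (x k - xs), x k - xs⟫) hδ nQ
    (fun k => sq_nonneg _) ne4 nf4 se4 sf4 fun k => ?_
  show ⟪V (k + 1) (x (k + 1) - xs), x (k + 1) - xs⟫ ≤ (1 + e4 k) * ⟪V k (x k - xs), x k - xs⟫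
    + f4 k - lamlb * (γlb * ε) * ‖B (x k) - B xs‖ ^ 2
  have hγ0 := (hγ k).1
  obtain ⟨p, hp⟩ : ∃ p, p = J k (x k - γ k • U k (B (x k) + b k)) := ⟨_, rfl⟩
  have hmono : 0 ≤ ⟪p - xs, V k (x k - xs - (p - xs)) - γ k • (B (x k) - B xs) - γ k • b k⟫ := by
    have h1 := hAmono _ _ _ _ (hJ k (x k - γ k • U k (B (x k) + b k))) hu
    rw [← hp] at h1
    have h2 : u = -B xs := eq_neg_of_add_eq_zero_left huB
    have h3 : V k (x k - xs - (p - xs)) - γ k • (B (x k) - B xs) - γ k • b k =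
        γ k • ((1 / γ k) • (V k (x k - γ k • U k (B (x k) + b k) - p)) - u) := by
      rw [smul_sub (γ k) ((1 / γ k) • _), smul_smul, mul_one_div_cancel hγ0.ne', one_smul, h2]
      simp only [map_sub, map_smul, hVU']
      module
    rw [h3, real_inner_smul_right]
    exact mul_nonneg hγ0.le h1
  have hγμ : γ k * μ ≤ 2 * β - ε := (le_div_iff₀ hμ).1 (hγub k)
  have s1 := step_aux hα hμ (hUs k) (hVs k) (hUpos k) (hUV' k) (hVU' k) (hUnorm k) hγ0 (hγG k)
    hγμ (x k - xs) (p - xs) (B (x k) - B xs) (b k) (hB _ _) hmono hε.1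
  have s2 := relax_aux hα hμ (hUs k) (hVs k) (hUpos k) (hUV' k) (hUnorm k) (hlam k).1 (hlam' k).2
    (x k - xs) (p - xs) (a k)
  have hxx : x k - xs + lam k • (p - xs + a k - (x k - xs)) = x (k + 1) - xs := by
    rw [hx k, ← hp]; module
  rw [hxx] at s2
  have s3 := change_aux (c := 1 + η k) (by linarith [hη0 k]) (hUs k)
    (fun y => le_trans (by positivity) (hUpos k y)) (hUV' k) (hUV' (k + 1)) (hUmono k)
    (x (k + 1) - xs)
  have hQ := nQ k
  change _ ≤ (1 + e1 k) * _ + f1 k - _ at s1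
  change _ ≤ (1 + e2 k) * _ + f2 k at s2
  have E3 : e3 k = e1 k + e2 k + e1 k * e2 k := rfl
  have F3 : f3 k = f1 k + f1 k * e2 k + f2 k := rfl
  have E4 : e4 k = e3 k + η k + e3 k * η k := rfl
  have F4 : f4 k = f3 k + f3 k * η k := rfl
  have t0 : lamlb * (γlb * ε) * ‖B (x k) - B xs‖ ^ 2 ≤
      lam k * (γ k * ε * ‖B (x k) - B xs‖ ^ 2) := by
    rw [mul_assoc]
    have := hε.1
    have := (hlam k).1
    exact mul_le_mul (hlam' k).1 (by gcongr; exact hγ' k) (by positivity) (by positivity)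
  have nd : 0 ≤ lamlb * (γlb * ε) * ‖B (x k) - B xs‖ ^ 2 := by positivity
  have v1 := ne1 k
  have v2 := nf1 k
  have v3 := ne2 k
  have v4 := hη0 k
  have v5 := (hlam' k).2
  have v6 := (hlam k).1
  generalize lamlb * (γlb * ε) * ‖B (x k) - B xs‖ ^ 2 = d at *
  generalize γ k * ε * ‖B (x k) - B xs‖ ^ 2 = d' at *
  generalize ⟪V k (x k - xs), x k - xs⟫ = Q at *
  generalize ⟪V k (p - xs), p - xs⟫ = Pq at *
  generalize ⟪V k (x (k + 1) - xs), x (k + 1) - xs⟫ = R at *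
  have t1 : (1 - lam k) * Q + lam k * Pq ≤ (1 + e1 k) * Q + f1 k - d := by
    have m1 := mul_le_mul_of_nonneg_left s1 v6.le
    have m2 := mul_nonneg (sub_nonneg.2 v5) (mul_nonneg v1 hQ)
    have m3 := mul_nonneg (sub_nonneg.2 v5) v2
    nlinarith
  have t2 : R ≤ (1 + e3 k) * Q + f3 k - d := by
    have m1 := mul_le_mul_of_nonneg_left t1 (by linarith : 0 ≤ 1 + e2 k)
    have m2 := mul_nonneg v3 nd
    rw [E3, F3]
    linarith
  have m1 := mul_le_mul_of_nonneg_left t2 (by linarith : 0 ≤ 1 + η k)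
  have m2 := mul_nonneg v4 nd
  rw [E4, F4]
  linarith
end
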